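/- arXiv:1405.6107 — 2 statements merged into one kernel-verified Lean document; each statement's English description precedes it below -/
import Mathlib

section
/- Assume the Continuum Hypothesis. If X is a productively Lindelöf topological space of countable tightness, then X is powerfully Lindelöf. -/
open Set Cardinal Topology

universe u v

/-- A space is quasi-Lindelöf if every open cover has a countable subcover
(no separation axioms assumed). -/
def QuasiLindelofSp (X : Type u) [TopologicalSpace X] : Prop :=
  ∀ 𝒰 : Set (Set X), (∀ U ∈ 𝒰, IsOpen U) → ⋃₀ 𝒰 = Set.univ →
    ∃ 𝒱 ⊆ 𝒰, 𝒱.Countable ∧ ⋃₀ 𝒱 = Set.univ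

/-- Lindelöf in the sense of Engelking: regular (T3, including T1) and
every open cover has a countable subcover. -/
def EngLindelofSp (X : Type u) [TopologicalSpace X] : Prop :=
  RegularSpace X ∧ T1Space X ∧ QuasiLindelofSp X

/-- X is productively Lindelöf if X × Y is Lindelöf for every Lindelöf space Y. -/
def ProductivelyLindelofSp (X : Type u) [TopologicalSpace X] : Prop :=
  ∀ (Y : Type u) [TopologicalSpace Y], EngLindelofSp Y → EngLindelofSp (X × Y)

/-- X is productively quasi-Lindelöf if X × Y is quasi-Lindelöf for every Lindelöf space Y. -/
def ProductivelyQuasiLindelofSp (X : Type u) [TopologicalSpace X] : Prop :=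
  ∀ (Y : Type u) [TopologicalSpace Y], EngLindelofSp Y → QuasiLindelofSp (X × Y)

/-- X is powerfully Lindelöf if X^ω is Lindelöf. -/
def PowerfullyLindelofSp (X : Type u) [TopologicalSpace X] : Prop :=
  EngLindelofSp (ℕ → X)

/-- X is powerfully quasi-Lindelöf if X^ω is quasi-Lindelöf. -/
def PowerfullyQuasiLindelofSp (X : Type u) [TopologicalSpace X] : Prop :=
  QuasiLindelofSp (ℕ → X)

/-- Tightness of X is at most κ. -/
def TightnessLE (X : Type u) [TopologicalSpace X] (κ : Cardinal.{u}) : Prop :=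
  ∀ (A : Set X) (x : X), x ∈ closure A → ∃ B ⊆ A, #B ≤ κ ∧ x ∈ closure B

/-- X has countable tightness. -/
def CountableTightness (X : Type u) [TopologicalSpace X] : Prop :=
  ∀ (A : Set X) (x : X), x ∈ closure A → ∃ B ⊆ A, B.Countable ∧ x ∈ closure B

/-- The Lindelöf number of X is at most κ: every open cover has a subcover of size ≤ κ. -/
def LindelofNumberLE (X : Type u) [TopologicalSpace X] (κ : Cardinal.{u}) : Prop :=
  ∀ 𝒰 : Set (Set X), (∀ U ∈ 𝒰, IsOpen U) → ⋃₀ 𝒰 = Set.univ →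
    ∃ 𝒱 ⊆ 𝒰, #𝒱 ≤ κ ∧ ⋃₀ 𝒱 = Set.univ

/-- The weight of X is at most κ: there is a base of size ≤ κ. -/
def WeightLE (X : Type u) [TopologicalSpace X] (κ : Cardinal.{u}) : Prop :=
  ∃ B : Set (Set X), TopologicalSpace.IsTopologicalBasis B ∧ #B ≤ κ

/-- N is a network for X. -/
def IsNetwork (X : Type u) [TopologicalSpace X] (N : Set (Set X)) : Prop :=
  ∀ (x : X) (U : Set X), IsOpen U → x ∈ U → ∃ n ∈ N, x ∈ n ∧ n ⊆ U

/-- X is linearly Lindelöf: regular (incl. T1) and every open cover linearly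
ordered by inclusion has a countable subcover. -/
def LinearlyLindelofSp (X : Type u) [TopologicalSpace X] : Prop :=
  RegularSpace X ∧ T1Space X ∧
    ∀ 𝒰 : Set (Set X), (∀ U ∈ 𝒰, IsOpen U) → IsChain (· ⊆ ·) 𝒰 → ⋃₀ 𝒰 = Set.univ →
      ∃ 𝒱 ⊆ 𝒰, 𝒱.Countable ∧ ⋃₀ 𝒱 = Set.univ

/-- U ⊆ X^ω is a basic open set: a product of open sets, all but finitely many of
which equal X. -/
def IsBasicOpen (X : Type u) [TopologicalSpace X] (U : Set (ℕ → X)) : Prop :=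
  ∃ V : ℕ → Set X, (∀ i, IsOpen (V i)) ∧ {i | V i ≠ Set.univ}.Finite ∧
    U = Set.pi Set.univ V

/-- A family of subsets of Z is point-κ if every point belongs to at most κ members. -/
def PointLE {Z : Type u} (𝒲 : Set (Set Z)) (κ : Cardinal.{u}) : Prop :=
  ∀ z : Z, #({W ∈ 𝒲 | z ∈ W}) ≤ κ

/-- A non-empty space is zero-dimensional if it is T1 and has a base of clopen sets. -/
def ZeroDimensionalSp (Y : Type u) [TopologicalSpace Y] : Prop :=
  Nonempty Y ∧ T1Space Y ∧
    ∃ B : Set (Set Y), TopologicalSpace.IsTopologicalBasis B ∧ ∀ b ∈ B, IsClopen b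

theorem quasi_iff {X : Type u} [TopologicalSpace X] : QuasiLindelofSp X ↔ LindelofSpace X := by
  constructor
  · intro h
    refine ⟨isLindelof_of_countable_subcover ?_⟩
    intro ι U hU hc
    obtain ⟨V, hV, hVc, hVu⟩ := h (range U) (by rintro _ ⟨i, rfl⟩; exact hU i)
      (by rw [sUnion_range]; exact univ_subset_iff.1 hc)
    obtain ⟨t, ht, -, htV⟩ : ∃ t : Set ι, t.Countable ∧ True ∧ U '' t = V := by
      choose f hf using fun v : V => hV v.2
      haveI := hVc.to_subtype
      refine ⟨range f, countable_range f, trivial, ?_⟩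
      ext v
      constructor
      · rintro ⟨_, ⟨w, rfl⟩, rfl⟩
        rw [hf]; exact w.2
      · intro hv
        exact ⟨_, ⟨⟨v, hv⟩, rfl⟩, hf _⟩
    refine ⟨t, ht, ?_⟩
    rw [← sUnion_image, htV, hVu]
  · intro h U hU hc
    obtain ⟨t, ht, htU⟩ := (isLindelof_univ (X := X)).elim_countable_subcover
      (fun u : U => (u : Set X)) (fun u => hU u u.2) (by rw [← sUnion_eq_iUnion, hc])
    refine ⟨Subtype.val '' t, by rintro _ ⟨v, -, rfl⟩; exact v.2, ht.image _, ?_⟩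
    rw [sUnion_image]
    exact univ_subset_iff.1 htU

theorem eng_closedEmb {A : Type u} {B : Type v} [TopologicalSpace A] [TopologicalSpace B] {f : A → B}
    (hf : IsClosedEmbedding f) (h : EngLindelofSp B) : EngLindelofSp A := by
  obtain ⟨h1, h2, h3⟩ := h
  rw [quasi_iff] at h3
  refine ⟨hf.isEmbedding.isInducing.regularSpace, hf.isEmbedding.t1Space, quasi_iff.2 ?_⟩
  exact hf.LindelofSpace

theorem prod_closed {X : Type u} [TopologicalSpace X] (h : ProductivelyLindelofSp X)
    {Z : Set X} (hZ : IsClosed Z) : ProductivelyLindelofSp Z := by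
  intro Y _ hY
  refine eng_closedEmb (f := Prod.map (Subtype.val : Z → X) (id : Y → Y)) ?_ (h Y hY)
  exact hZ.isClosedEmbedding_subtypeVal.prodMap IsClosedEmbedding.id

theorem prod_eng {X : Type u} [TopologicalSpace X] (h : ProductivelyLindelofSp X) :
    EngLindelofSp X := by
  have : EngLindelofSp PUnit.{u+1} :=
    ⟨inferInstance, inferInstance, quasi_iff.2 inferInstance⟩
  exact eng_closedEmb (Homeomorph.prodPUnit X).symm.isClosedEmbedding (h PUnit this)

/-- skeleton for building test spaces -/
theorem skel {X : Type u} [TopologicalSpace X] (h : ProductivelyLindelofSp X)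
    {C : Type} [TopologicalSpace C] [CompactSpace C] [T2Space C] (e : X → C) (he : Continuous e)
    {ι : Type} [Uncountable ι] (P : Set C) (hP : ∀ x, e x ∉ P) (x : ι → X)
    (H : ∀ W, IsOpen W → P ⊆ W → ∃ V : ℕ → Set C, (∀ n, IsCompact (V n)) ∧ (∀ n, V n ⊆ W) ∧
      {i | e (x i) ∉ ⋃ n, V n}.Countable ∧ IsLindelof (P \ ⋃ n, V n)) : False := by
  letI : TopologicalSpace ι := ⊥
  haveI : DiscreteTopology ι := ⟨rfl⟩
  let Y : Set (C × OnePoint ι) :=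
    {y | (y.1 ∈ P ∧ y.2 = OnePoint.infty) ∨ ∃ i : ι, y.1 = e (x i) ∧ y.2 = (i : OnePoint ι)}
  have hY : EngLindelofSp Y := by
    refine ⟨inferInstance, inferInstance, quasi_iff.2 ?_⟩
    rw [← isLindelof_iff_LindelofSpace]
    refine isLindelof_of_countable_subcover ?_
    intro J U hU hc
    let W : Set C := {p | (p, OnePoint.infty) ∈ ⋃ j, U j}
    have hWo : IsOpen W := (isOpen_iUnion hU).preimage
        (f := (fun p : C => (p, (OnePoint.infty : OnePoint ι)))) (by fun_prop)
    obtain ⟨V, hVc, hVW, hVD, hVP⟩ := H W hWo (fun p hp => hc (Or.inl ⟨hp, rfl⟩))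
    have hfin : ∀ n, ∃ t : Finset J, V n ×ˢ {(OnePoint.infty : OnePoint ι)} ⊆ ⋃ k ∈ t, U k ∧
        {j | e (x j) ∈ V n ∧ (e (x j), (j : OnePoint ι)) ∉ ⋃ k ∈ t, U k}.Finite := by
      intro n
      have hcomp : IsCompact (V n ×ˢ {(OnePoint.infty : OnePoint ι)}) :=
        (hVc n).prod isCompact_singleton
      obtain ⟨t, ht⟩ := hcomp.elim_finite_subcover U hU (by
        rintro ⟨p, q⟩ ⟨hp, hq⟩
        simp only [mem_singleton_iff] at hq
        subst hq
        exact hVW n hp)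
      refine ⟨t, ht, ?_⟩
      obtain ⟨u, v, hu, hv, hu', hv', huv⟩ := generalized_tube_lemma
        (hVc n) isCompact_singleton
        (isOpen_biUnion fun k (_ : k ∈ t) => hU k) ht
      have hf : ((fun j : ι => (j : OnePoint ι)) ⁻¹' v)ᶜ.Finite := by
        have := ((OnePoint.isOpen_iff_of_mem (hv' rfl)).1 hv).2
        exact this.finite_of_discrete
      refine hf.subset ?_
      rintro j ⟨hj1, hj2⟩ hjv
      exact hj2 (huv ⟨hu' hj1, hjv⟩)
    choose t htV ht using hfin
    have hDc := countable_iUnion fun n => (ht n).countable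
    let E : Set ι := {j | (e (x j), (j : OnePoint ι)) ∉ ⋃ n, ⋃ k ∈ t n, U k}
    have hE : E.Countable := by
      refine (hVD.union hDc).mono ?_
      intro j hj
      by_cases hji : e (x j) ∈ ⋃ n, V n
      · right
        obtain ⟨n, hn⟩ := mem_iUnion.1 hji
        refine mem_iUnion.2 ⟨n, hn, ?_⟩
        intro hh; exact hj (mem_iUnion.2 ⟨n, hh⟩)
      · left; exact hji
    have hch : ∀ j : ι, ∃ k, (e (x j), (j : OnePoint ι)) ∈ U k := by
      intro j
      exact mem_iUnion.1 (hc (Or.inr ⟨j, rfl, rfl⟩))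
    choose g hg using hch
    obtain ⟨t', ht'c, ht'⟩ := (hVP.image (f := (fun p : C => (p, (OnePoint.infty : OnePoint ι))))
      (by fun_prop)).elim_countable_subcover U hU (by
        rintro _ ⟨p, hp, rfl⟩
        exact hc (Or.inl ⟨hp.1, rfl⟩))
    refine ⟨((⋃ n, (t n : Set J)) ∪ g '' E) ∪ t',
      ((countable_iUnion fun n => (t n).countable_toSet).union (hE.image g)).union ht'c, ?_⟩
    have key : ∀ y n, y ∈ ⋃ k ∈ t n, U k → y ∈ ⋃ k ∈ ((⋃ n, (t n : Set J)) ∪ g '' E) ∪ t', U k := by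
      intro y n hn
      obtain ⟨k, hk, hkU⟩ := mem_iUnion₂.1 hn
      exact mem_biUnion (Or.inl (Or.inl (mem_iUnion.2 ⟨n, hk⟩))) hkU
    rintro ⟨p, q⟩ (⟨hp, hq⟩ | ⟨j, hp, hq⟩)
    · simp only at hp hq
      subst hq
      by_cases hpV : p ∈ ⋃ n, V n
      · obtain ⟨n, hn⟩ := mem_iUnion.1 hpV
        exact key _ n (htV n ⟨hn, rfl⟩)
      · obtain ⟨k, hk, hkU⟩ := mem_iUnion₂.1 (ht' ⟨p, ⟨hp, hpV⟩, rfl⟩)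
        exact mem_biUnion (Or.inr hk) hkU
    · simp only at hp hq
      subst hp hq
      by_cases hj : j ∈ E
      · exact mem_biUnion (Or.inl (Or.inr ⟨j, hj, rfl⟩)) (hg j)
      · simp only [E, mem_setOf_eq, not_not] at hj
        obtain ⟨n, hn⟩ := mem_iUnion.1 hj
        exact key _ n hn
  have hY' : EngLindelofSp (ULift.{u} Y) :=
    eng_closedEmb (Homeomorph.ulift (X := Y)).isClosedEmbedding hY
  obtain ⟨-, -, hXY⟩ := h _ hY'
  let pr : X × ULift.{u} Y → C × OnePoint ι := fun z => z.2.down.1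
  have hpr : Continuous pr := by
    exact continuous_subtype_val.comp (continuous_uliftDown.comp continuous_snd)
  let Op : Option ι → Set (X × ULift.{u} Y) := fun o => match o with
    | none => {z | e z.1 ≠ (pr z).1}
    | some i => {z | (pr z).2 = (i : OnePoint ι)}
  have hOp : ∀ o, IsOpen (Op o) := by
    rintro (_ | i)
    · exact isOpen_ne_fun (he.comp continuous_fst) (continuous_fst.comp hpr)
    · have : IsOpen ({(i : OnePoint ι)} : Set (OnePoint ι)) := by
        rw [OnePoint.isOpen_iff_of_notMem (by simp)]
        exact isOpen_discrete _
      exact this.preimage (continuous_snd.comp hpr)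
  rw [quasi_iff] at hXY
  obtain ⟨T, hT, hTc⟩ := (isLindelof_univ (X := X × ULift.{u} Y)).elim_countable_subcover Op hOp (by
    rintro ⟨a, ⟨⟨⟨p, q⟩, hpq⟩⟩⟩ -
    rcases hpq with ⟨hp, hq⟩ | ⟨i, hp, hq⟩
    · refine mem_iUnion.2 ⟨none, ?_⟩
      intro hh
      apply hP a
      have : e a = p := hh
      rw [this]; exact hp
    · exact mem_iUnion.2 ⟨some i, hq⟩)
  have : (univ : Set ι).Countable := by
    refine (hT.preimage (Option.some_injective ι)).mono ?_
    intro i _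
    obtain ⟨o, ho, hi⟩ := mem_iUnion₂.1 (hTc (mem_univ
      ((x i, ⟨⟨(e (x i), (i : OnePoint ι)), Or.inr ⟨i, rfl, rfl⟩⟩⟩) : X × ULift.{u} Y)))
    rcases o with _ | j
    · exact absurd rfl hi
    · have : (i : OnePoint ι) = (j : OnePoint ι) := hi
      rw [OnePoint.coe_eq_coe] at this
      subst this
      exact ho
  exact not_countable (countable_univ_iff.1 this)
/-- a copy of the first uncountable ordinal, under CH -/
structure Om (Ω : Type) [LinearOrder Ω] : Prop where
  cnt : ∀ a : Ω, (Iic a).Countable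
  bdd : ∀ S : Set Ω, S.Countable → ∃ b, ∀ a ∈ S, a < b
  sur : ∀ κ : Type, #κ ≤ 𝔠 → Nonempty κ → ∃ g : Ω → κ, Function.Surjective g

theorem Om.unc {Ω : Type} [LinearOrder Ω] (hΩ : Om Ω) : Uncountable Ω := by
  by_contra hh
  rw [not_uncountable_iff] at hh
  obtain ⟨b, hb⟩ := hΩ.bdd univ countable_univ
  exact lt_irrefl _ (hb b trivial)

theorem card_closed {H : Type} [TopologicalSpace H] [SecondCountableTopology H] :
    #{K : Set H // IsClosed K} ≤ 𝔠 := by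
  let B := TopologicalSpace.countableBasis H
  have hB := TopologicalSpace.isBasis_countableBasis H
  haveI : Countable B := (TopologicalSpace.countable_countableBasis H).to_subtype
  let f : {K : Set H // IsClosed K} → Set B := fun K => {b | (b : Set H) ⊆ K.1ᶜ}
  have hf : Function.Injective f := by
    intro K L hKL
    apply Subtype.ext
    rw [← compl_inj_iff]
    have aux : ∀ K : {K : Set H // IsClosed K}, K.1ᶜ = ⋃ b ∈ f K, (b : Set H) := by
      intro K
      ext x
      constructor
      · intro hx
        obtain ⟨b, hb, hxb, hbK⟩ := hB.exists_subset_of_mem_open hx K.2.isOpen_compl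
        exact mem_biUnion (show (⟨b, hb⟩ : B) ∈ f K from hbK) hxb
      · intro hx
        obtain ⟨b, hb, hxb⟩ := mem_iUnion₂.1 hx
        exact hb hxb
    rw [aux K, aux L, hKL]
  calc #{K : Set H // IsClosed K} ≤ #(Set B) := Cardinal.mk_le_of_injective hf
    _ = 2 ^ #B := Cardinal.mk_set
    _ ≤ 2 ^ ℵ₀ := Cardinal.power_le_power_left two_ne_zero (Cardinal.mk_le_aleph0)
    _ = 𝔠 := Cardinal.two_power_aleph0

theorem open_sigma {H : Type} [TopologicalSpace H] [CompactSpace H] [T2Space H]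
    [SecondCountableTopology H] {W : Set H} (hW : IsOpen W) :
    ∃ V : ℕ → Set H, (∀ n, IsCompact (V n)) ∧ ⋃ n, V n = W := by
  haveI : LocallyCompactSpace W := hW.locallyCompactSpace
  have : IsSigmaCompact W := isSigmaCompact_iff_sigmaCompactSpace.2 inferInstance
  exact this

/-- Michael's theorem -/
theorem michael {X : Type u} [TopologicalSpace X] (h : ProductivelyLindelofSp X)
    {Ω : Type} [LinearOrder Ω] (hΩ : Om Ω)
    {H : Type} [TopologicalSpace H] [CompactSpace H] [T2Space H]
    [SecondCountableTopology H] (f : X → H) (hf : Continuous f) :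
    ∃ V : ℕ → Set H, (∀ n, IsCompact (V n)) ∧ ⋃ n, V n = range f := by
  let κ := {K : {K : Set H // IsClosed K} // K.1 ⊆ range f}
  obtain ⟨g, hg⟩ := hΩ.sur κ ((Cardinal.mk_subtype_le _).trans card_closed)
    ⟨⟨⟨∅, isClosed_empty⟩, empty_subset _⟩⟩
  by_contra hcon
  have hx : ∀ i : Ω, ∃ x : X, ∀ j ≤ i, f x ∉ (g j).1.1 := by
    intro i
    by_contra hno
    push Not at hno
    apply hcon
    obtain ⟨s, hs⟩ := (hΩ.cnt i).exists_eq_range ⟨i, le_rfl⟩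
    refine ⟨fun n => (g (s n)).1.1, fun n => (g (s n)).1.2.isCompact, ?_⟩
    apply subset_antisymm
    · exact iUnion_subset fun n => (g (s n)).2
    · rintro _ ⟨x, rfl⟩
      obtain ⟨j, hj, hjx⟩ := hno x
      have : j ∈ range s := hs ▸ hj
      obtain ⟨n, rfl⟩ := this
      exact mem_iUnion.2 ⟨n, hjx⟩
  choose x hx using hx
  haveI := hΩ.unc
  refine skel h f hf (range f)ᶜ (fun x hh => hh ⟨x, rfl⟩) x ?_
  intro W hW hPW
  obtain ⟨V, hV, hVW⟩ := open_sigma hW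
  refine ⟨V, hV, fun n => hVW ▸ subset_iUnion V n, ?_, ?_⟩
  · obtain ⟨j, hj⟩ := hg ⟨⟨Wᶜ, hW.isClosed_compl⟩, compl_subset_comm.1 hPW⟩
    refine (hΩ.cnt j).mono ?_
    intro i hi
    by_contra hlt
    simp only [mem_Iic, not_le] at hlt
    have := hx i j hlt.le
    rw [hj] at this
    rw [hVW] at hi
    exact this hi
  · rw [hVW, diff_eq_empty.2 hPW]
    exact isLindelof_empty

theorem perfect_lindelof {C H : Type} [TopologicalSpace C] [TopologicalSpace H] [CompactSpace C]
    [T2Space H] [SecondCountableTopology H] (π : C → H) (hπ : Continuous π)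
    (M : Set H) : IsLindelof (π ⁻¹' M) := by
  refine isLindelof_of_countable_subcover ?_
  intro J U hU hc
  have h1 : ∀ s : M, ∃ t : Finset J, π ⁻¹' {s.1} ⊆ ⋃ k ∈ t, U k := by
    intro s
    refine (isClosed_singleton.preimage hπ).isCompact.elim_finite_subcover U hU ?_
    refine Subset.trans ?_ hc
    rintro p hp
    have : π p = s := hp
    rw [mem_preimage, this]; exact s.2
  choose t ht using h1
  let W : M → Set H := fun s => (π '' (⋃ k ∈ t s, U k)ᶜ)ᶜ
  have hW : ∀ s, IsOpen (W s) := fun s =>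
    (hπ.isClosedMap _ (isOpen_biUnion fun k _ => hU k).isClosed_compl).isOpen_compl
  have hsW : ∀ s : M, s.1 ∈ W s := by
    rintro s ⟨p, hp, hps⟩
    exact hp (ht s hps)
  obtain ⟨T, hT, hTc⟩ := (HereditarilyLindelofSpace.isLindelof M).elim_countable_subcover W hW
    (fun s hs => mem_iUnion.2 ⟨⟨s, hs⟩, hsW ⟨s, hs⟩⟩)
  refine ⟨⋃ s ∈ T, (t s : Set J), hT.biUnion fun s _ => (t s).countable_toSet, ?_⟩
  intro p hp
  obtain ⟨s, hs, hps⟩ := mem_iUnion₂.1 (hTc hp)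
  by_contra hne
  apply hps
  refine ⟨p, ?_, rfl⟩
  intro hh
  obtain ⟨k, hk, hkU⟩ := mem_iUnion₂.1 hh
  exact hne (mem_biUnion (mem_biUnion hs hk) hkU)

theorem Om.closing {Ω : Type} [LinearOrder Ω] [WellFoundedLT Ω] (hΩ : Om Ω) (f : Ω → Ω) (a : Ω) :
    ∃ δ, a < δ ∧ ∀ α < δ, f α < δ := by
  have h1 : ∀ b, ∃ c, b < c ∧ ∀ α ≤ b, f α < c := by
    intro b
    obtain ⟨c, hc⟩ := hΩ.bdd (f '' Iic b ∪ {b}) (((hΩ.cnt b).image f).union (countable_singleton b))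
    exact ⟨c, hc b (Or.inr rfl), fun α hα => hc _ (Or.inl ⟨α, hα, rfl⟩)⟩
  choose g hg1 hg2 using h1
  let d : ℕ → Ω := fun n => g^[n] a
  have hd : ∀ n, d (n + 1) = g (d n) := fun n => Function.iterate_succ_apply' g n a
  have hne : {b | ∀ n, d n < b}.Nonempty := by
    obtain ⟨b, hb⟩ := hΩ.bdd (range d) (countable_range d)
    exact ⟨b, fun n => hb _ ⟨n, rfl⟩⟩
  let δ := WellFounded.min (wellFounded_lt (α := Ω)) _ hne
  have hδ : ∀ n, d n < δ := WellFounded.min_mem (wellFounded_lt (α := Ω)) _ hne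
  refine ⟨δ, hδ 0, ?_⟩
  intro α hα
  have : ∃ n, α ≤ d n := by
    by_contra hno
    push Not at hno
    exact WellFounded.not_lt_min (wellFounded_lt (α := Ω)) {b | ∀ n, d n < b} hno hα
  obtain ⟨n, hn⟩ := this
  have := hg2 (d n) α hn
  rw [← hd] at this
  exact this.trans (hδ _)
theorem fuse {C : Type} [TopologicalSpace C] [CompactSpace C] (S : Set (Set C))
    (hcl : ∀ L ∈ S, IsClosed L) (hne : ∀ L ∈ S, L.Nonempty) {K : Type} [Countable K]
    (Bad : K → Set C) (hstep : ∀ L ∈ S, ∀ k, ∃ L' ∈ S, L' ⊆ L ∧ ∀ p ∈ L', p ∉ Bad k)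
    (L : Set C) (hL : L ∈ S) : ∃ p ∈ L, ∀ k, p ∉ Bad k := by
  rcases isEmpty_or_nonempty K with hK | hK
  · obtain ⟨p, hp⟩ := hne L hL
    exact ⟨p, hp, fun k => (hK.false k).elim⟩
  obtain ⟨t, ht⟩ := exists_surjective_nat K
  choose! nx h1 h2 h3 using hstep
  let a : ℕ → Set C := fun n => Nat.rec L (fun n A => nx A (t n)) n
  have ha : ∀ n, a n ∈ S := by
    intro n
    induction n with
    | zero => exact hL
    | succ n ih => exact h1 _ ih _
  have hdec : ∀ n, a (n + 1) ⊆ a n := fun n => h2 _ (ha n) _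
  obtain ⟨p, hp⟩ := IsCompact.nonempty_iInter_of_sequence_nonempty_isCompact_isClosed a hdec
    (fun n => hne _ (ha n)) (hcl _ (ha 0)).isCompact (fun n => hcl _ (ha n))
  rw [mem_iInter] at hp
  refine ⟨p, hp 0, fun k => ?_⟩
  obtain ⟨n, rfl⟩ := ht k
  exact h3 _ (ha n) _ p (hp (n + 1))

/-- agreement below a level -/
def Agr {Ω : Type} [LinearOrder Ω] (δ : Ω) (p q : Ω → unitInterval) : Prop := ∀ ξ < δ, p ξ = q ξ

theorem Agr.mono {Ω : Type} [LinearOrder Ω] {δ δ' : Ω} {p q : Ω → unitInterval} (h : Agr δ' p q)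
    (hd : δ ≤ δ') : Agr δ p q := fun ξ hξ => h ξ (hξ.trans_le hd)

theorem Agr.symm {Ω : Type} [LinearOrder Ω] {δ : Ω} {p q : Ω → unitInterval} (h : Agr δ p q) :
    Agr δ q p := fun ξ hξ => (h ξ hξ).symm

theorem Agr.trans {Ω : Type} [LinearOrder Ω] {δ : Ω} {p q r : Ω → unitInterval} (h : Agr δ p q)
    (h' : Agr δ q r) : Agr δ p r := fun ξ hξ => (h ξ hξ).trans (h' ξ hξ)

theorem agr_iff {Ω : Type} [LinearOrder Ω] {δ : Ω} {p q : Ω → unitInterval} :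
    (Iio δ).domRestrict p = (Iio δ).domRestrict q ↔ Agr δ p q := by
  constructor
  · intro h ξ hξ
    exact congrFun h ⟨ξ, hξ⟩
  · intro h
    funext ξ
    exact h ξ.1 ξ.2

/-- large sets -/
def Large {Ω : Type} [LinearOrder Ω] (R : Set (Ω → unitInterval))
    (O : Ω → ℕ → Set (Ω → unitInterval)) (s : Ω → Ω) (L : Set (Ω → unitInterval)) : Prop :=
  ∀ δ, ∃ x ∈ R, (∃ q ∈ L, Agr δ q x) ∧ ∀ β, s β ≤ δ → ∃ m, x ∉ O β m

section
variable {Ω : Type} [LinearOrder Ω] [WellFoundedLT Ω] (hΩ : Om Ω) {R : Set (Ω → unitInterval)}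
    {O : Ω → ℕ → Set (Ω → unitInterval)} {s : Ω → Ω}
    (hO : ∀ β m, IsOpen (O β m))
    (hdep : ∀ β m p q, Agr (s β) p q → p ∈ O β m → q ∈ O β m)
    (hk : ∀ K ⊆ R, IsCompact K → ∃ β, ∀ m, K ⊆ O β m)
    (hs : ∀ β, β ≤ s β)

theorem not_large {L : Set (Ω → unitInterval)} (h : ¬ Large R O s L) :
    ∃ δ, ∀ x ∈ R, ∀ q ∈ L, Agr δ q x → ∃ β, s β ≤ δ ∧ ∀ m, x ∈ O β m := by
  unfold Large at h
  push Not at h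
  obtain ⟨δ, h⟩ := h
  exact ⟨δ, fun x hx q hq hqx => h x hx ⟨q, hq, hqx⟩⟩

include hΩ hdep in
theorem large_split {L : Set (Ω → unitInterval)} (h : Large R O s L) {K : Type} [Countable K]
    (M : K → Set (Ω → unitInterval)) (β : Ω)
    (hL : ∀ p ∈ L, (∀ m, p ∈ O β m) ∨ ∃ k, p ∈ M k) : ∃ k, Large R O s (M k) := by
  by_contra hno
  push Not at hno
  choose d hd using fun k => not_large (hno k)
  obtain ⟨δ, hδ⟩ := hΩ.bdd (range d ∪ {s β}) ((countable_range d).union (countable_singleton _))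
  obtain ⟨x, hx, ⟨q, hq, hqx⟩, hxb⟩ := h δ
  have hsd : s β ≤ δ := (hδ _ (Or.inr rfl)).le
  rcases hL q hq with h1 | ⟨k, hk⟩
  · obtain ⟨m, hm⟩ := hxb β hsd
    exact hm (hdep β m q x (hqx.mono hsd) (h1 m))
  · have hdk : d k ≤ δ := (hδ _ (Or.inl ⟨k, rfl⟩)).le
    obtain ⟨β', hb1, hb2⟩ := hd k x hx q hk (hqx.mono hdk)
    obtain ⟨m, hm⟩ := hxb β' (hb1.trans hdk)
    exact hm (hb2 m)

include hΩ hdep hO hk in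
theorem large_point {L : Set (Ω → unitInterval)} (h : Large R O s L) (hL : IsClosed L) :
    ∃ p ∈ L, p ∉ R ∧ ∀ N ∈ 𝓝 p, Large R O s (L ∩ N) := by
  by_contra hno
  push Not at hno
  choose N hN1 hN2 using fun p : {p // p ∈ L ∧ p ∉ R} => hno p.1 p.2.1 p.2.2
  let L' := L \ ⋃ p, interior (N p)
  have hL' : IsClosed L' := hL.sdiff (isOpen_iUnion fun p => isOpen_interior)
  have hL'R : L' ⊆ R := by
    intro p hp
    by_contra hpR
    exact hp.2 (mem_iUnion.2 ⟨⟨p, hp.1, hpR⟩, mem_interior_iff_mem_nhds.2 (hN1 ⟨p, hp.1, hpR⟩)⟩)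
  obtain ⟨β, hβ⟩ := hk L' hL'R hL'.isCompact
  have h1 : ∀ m, ∃ t : Finset {p // p ∈ L ∧ p ∉ R}, L \ O β m ⊆ ⋃ p ∈ t, interior (N p) := by
    intro m
    refine (hL.sdiff (hO β m)).isCompact.elim_finite_subcover _ (fun p => isOpen_interior) ?_
    intro p hp
    by_contra hpn
    exact hp.2 (hβ m ⟨hp.1, hpn⟩)
  choose t ht using h1
  obtain ⟨⟨m, p⟩, hmp⟩ := large_split hΩ hdep h (K := Σ m, t m) (fun k => L ∩ N k.2.1) β (by
    intro p hp
    by_cases hpm : ∀ m, p ∈ O β m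
    · exact Or.inl hpm
    · right
      push Not at hpm
      obtain ⟨m, hm⟩ := hpm
      obtain ⟨q, hq, hpq⟩ := mem_iUnion₂.1 (ht m ⟨hp, hm⟩)
      exact ⟨⟨m, ⟨q, hq⟩⟩, hp, interior_subset hpq⟩)
  exact hN2 _ hmp

include hΩ hdep hO hk hs in
theorem fusion {L : Set (Ω → unitInterval)} (h : Large R O s L) (hL : IsClosed L)
    (hsig : ∀ δ : Ω, ∃ V : ℕ → Set (Iio δ → unitInterval), (∀ n, IsCompact (V n)) ∧
      ⋃ n, V n = (Iio δ).domRestrict '' R)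
    (hlev : ∀ p ∉ R, ∃ δ, ∀ x ∈ R, ¬ Agr δ p x) :
    ∃ p ∈ L, p ∉ R ∧ ∀ β, (∃ x ∈ R, Agr (s β) p x) → ∃ m, p ∉ O β m := by
  have hcI : ∀ a : Ω, Countable (Iio a) := fun a =>
    ((hΩ.cnt a).mono Iio_subset_Iic_self).to_subtype
  have hcont : ∀ a : Ω, Continuous (fun p : Ω → unitInterval => (Iio a).domRestrict p) := by
    intro a
    exact continuous_pi fun i => continuous_apply _
  let B : Ω → Set (Set (Ω → unitInterval)) := fun α =>
    (⋃ a ∈ Iic α, (fun b => (Iio a).domRestrict ⁻¹' closure b) ''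
      TopologicalSpace.countableBasis (Iio a → unitInterval)) ∪
    (⋃ β ∈ Iic α, range fun m => (O β m)ᶜ)
  have hBc : ∀ α, (B α).Countable := by
    intro α
    refine Countable.union ?_ ?_
    · exact (hΩ.cnt α).biUnion fun a _ =>
        (TopologicalSpace.countable_countableBasis _).image _
    · exact (hΩ.cnt α).biUnion fun β _ => countable_range _
  have hBcl : ∀ α, ∀ N ∈ B α, IsClosed N := by
    rintro α N (hN | hN)
    · obtain ⟨a, ha, b, hb, rfl⟩ := mem_iUnion₂.1 hN
      exact isClosed_closure.preimage (hcont a)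
    · obtain ⟨β, hβ, m, rfl⟩ := mem_iUnion₂.1 hN
      exact (hO β m).isClosed_compl
  have hBm : ∀ α α', α ≤ α' → B α ⊆ B α' := by
    intro α α' hα
    exact union_subset_union (biUnion_subset_biUnion_left (Iic_subset_Iic.2 hα))
      (biUnion_subset_biUnion_left (Iic_subset_Iic.2 hα))
  let LL : Ω → Set (Set (Ω → unitInterval)) := fun α =>
    (fun F => L ∩ ⋂₀ F) '' {F | F.Finite ∧ F ⊆ B α}
  have hLLc : ∀ α, (LL α).Countable := fun α =>
    (Set.countable_ofPred_finite_subset (hBc α)).image _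
  have hLLcl : ∀ α, ∀ L' ∈ LL α, IsClosed L' := by
    rintro α _ ⟨F, ⟨hF, hFB⟩, rfl⟩
    exact hL.inter (isClosed_sInter fun N hN => hBcl α N (hFB hN))
  have hLLm : ∀ α α', α ≤ α' → LL α ⊆ LL α' := by
    rintro α α' hα _ ⟨F, ⟨hF, hFB⟩, rfl⟩
    exact ⟨F, ⟨hF, hFB.trans (hBm _ _ hα)⟩, rfl⟩
  have hLLi : ∀ α, ∀ L' ∈ LL α, ∀ N ∈ B α, L' ∩ N ∈ LL α := by
    rintro α _ ⟨F, ⟨hF, hFB⟩, rfl⟩ N hN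
    refine ⟨insert N F, ⟨hF.insert N, insert_subset hN hFB⟩, ?_⟩
    simp only [sInter_insert]
    rw [inter_comm N, ← inter_assoc]
  have hh : ∀ L', ∃ d : Ω, (IsClosed L' ∧ Large R O s L') →
      ∃ p ∈ L', (∀ x ∈ R, ¬ Agr d p x) ∧ ∀ N ∈ 𝓝 p, Large R O s (L' ∩ N) := by
    intro L'
    by_cases hc : IsClosed L' ∧ Large R O s L'
    · obtain ⟨p, hp, hpR, hpN⟩ := large_point hΩ hO hdep hk hc.2 hc.1
      obtain ⟨d, hd⟩ := hlev p hpR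
      exact ⟨d, fun _ => ⟨p, hp, hd, hpN⟩⟩
    · obtain ⟨d, -⟩ := hΩ.bdd ∅ countable_empty
      exact ⟨d, fun hc' => absurd hc' hc⟩
  choose d hd using hh
  choose f hf using fun α => hΩ.bdd (d '' LL α) ((hLLc α).image d)
  obtain ⟨a0, -⟩ := hΩ.bdd ∅ countable_empty
  obtain ⟨δ, ha0, hδ⟩ := hΩ.closing f a0
  obtain ⟨V, hV, hVR⟩ := hsig δ
  have hKc : Countable {β // s β < δ} := by
    refine Set.Countable.to_subtype (s := {β | s β < δ}) ((hΩ.cnt δ).mono ?_)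
    intro β hβ
    exact (hs β).trans (le_of_lt hβ)
  let Bad : ℕ ⊕ {β // s β < δ} → Set (Ω → unitInterval) := fun k => match k with
    | .inl n => (Iio δ).domRestrict ⁻¹' V n
    | .inr β => ⋂ m, O β.1 m
  obtain ⟨p, hpL, hp⟩ := fuse {L' | ∃ α < δ, L' ∈ LL α ∧ Large R O s L'}
    (by rintro L' ⟨α, -, h1, -⟩; exact hLLcl α L' h1)
    (by
      rintro L' ⟨α, -, -, h1⟩
      obtain ⟨x, -, ⟨q, hq, -⟩, -⟩ := h1 a0
      exact ⟨q, hq⟩) Bad (by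
      rintro L' ⟨α, hα, hLα, hlarge⟩ (n | ⟨β, hβ⟩)
      · obtain ⟨p, hp, hpR, hpN⟩ := hd L' ⟨hLLcl α L' hLα, hlarge⟩
        have hdδ : d L' < δ := (hf α _ ⟨L', hLα, rfl⟩).trans (hδ α hα)
        let a := d L'
        -- the projection of V n
        let ρ : (Iio δ → unitInterval) → (Iio a → unitInterval) :=
          fun z ξ => z ⟨ξ.1, lt_trans ξ.2 hdδ⟩
        have hρ : Continuous ρ := continuous_pi fun i => continuous_apply _
        have hcl : IsClosed (ρ '' V n) := ((hV n).image hρ).isClosed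
        have hpn : (Iio a).domRestrict p ∈ (ρ '' V n)ᶜ := by
          rintro ⟨z, hz, hzp⟩
          have : z ∈ (Iio δ).domRestrict '' R := hVR ▸ mem_iUnion.2 ⟨n, hz⟩
          obtain ⟨x, hx, rfl⟩ := this
          exact hpR x hx (agr_iff.1 hzp).symm
        obtain ⟨b, hb, hpb, hbV⟩ :=
          (TopologicalSpace.isBasis_countableBasis (Iio a → unitInterval)).exists_closure_subset
            (hcl.isOpen_compl.mem_nhds hpn)
        let N : Set (Ω → unitInterval) := (Iio a).domRestrict ⁻¹' closure b
        have hNB : N ∈ B (max α a) :=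
          Or.inl (mem_biUnion (show a ∈ Iic (max α a) from le_max_right _ _) ⟨b, hb, rfl⟩)
        have hNp : N ∈ 𝓝 p := by
          refine (hcont a).continuousAt.preimage_mem_nhds ?_
          exact Filter.mem_of_superset
            (((TopologicalSpace.isBasis_countableBasis _).isOpen hb).mem_nhds hpb) subset_closure
        refine ⟨L' ∩ N, ⟨max α a, max_lt hα hdδ, ?_, hpN N hNp⟩, inter_subset_left, ?_⟩
        · exact hLLi _ _ (hLLm _ _ (le_max_left _ _) hLα) _ hNB
        · rintro q ⟨-, hq⟩ hqV
          exact hbV hq ⟨_, hqV, rfl⟩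
      · obtain ⟨m, hm⟩ := large_split hΩ hdep hlarge (fun m => L' ∩ (O β m)ᶜ) β (by
          intro p hp
          by_cases hpm : ∀ m, p ∈ O β m
          · exact Or.inl hpm
          · right
            push Not at hpm
            obtain ⟨m, hm⟩ := hpm
            exact ⟨m, hp, hm⟩)
        have hNB : (O β m)ᶜ ∈ B (max α β) :=
          Or.inr (mem_biUnion (show β ∈ Iic (max α β) from le_max_right _ _) ⟨m, rfl⟩)
        refine ⟨L' ∩ (O β m)ᶜ, ⟨max α β, max_lt hα ((hs β).trans_lt hβ), ?_, hm⟩,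
          inter_subset_left, ?_⟩
        · exact hLLi _ _ (hLLm _ _ (le_max_left _ _) hLα) _ hNB
        · rintro q ⟨-, hq⟩ hqV
          exact hq (mem_iInter.1 hqV m))
    L ⟨a0, ha0, ⟨∅, ⟨finite_empty, empty_subset _⟩, by simp⟩, h⟩
  have hex : ∀ x ∈ R, ¬ Agr δ p x := by
    intro x hx hpx
    have : (Iio δ).domRestrict p ∈ ⋃ n, V n := by
      rw [hVR]
      exact ⟨x, hx, (agr_iff.2 hpx).symm⟩
    obtain ⟨n, hn⟩ := mem_iUnion.1 this
    exact hp (.inl n) hn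
  refine ⟨p, hpL, fun hpR => hex p hpR (fun _ _ => rfl), ?_⟩
  rintro β ⟨x, hx, hpx⟩
  have hβ : s β < δ := by
    by_contra hle
    exact hex x hx (hpx.mono (not_lt.1 hle))
  by_contra hno
  push Not at hno
  exact hp (.inr ⟨β, hβ⟩) (mem_iInter.2 hno)

end
theorem level_exists {X : Type u} [TopologicalSpace X] (h : ProductivelyLindelofSp X)
    {Ω : Type} [LinearOrder Ω] (hΩ : Om Ω)
    (e : X → Ω → unitInterval) (he : Continuous e) :
    ∀ p ∉ range e, ∃ δ, ∀ x ∈ range e, ¬ Agr δ p x := by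
  intro p hp
  have hL : LindelofSpace X := quasi_iff.1 (prod_eng h).2.2
  obtain ⟨T, hT, hTc⟩ := (isLindelof_univ (X := X)).elim_countable_subcover
    (fun ξ : Ω => {x | e x ξ ≠ p ξ})
    (fun ξ => isOpen_ne_fun ((continuous_apply ξ).comp he) continuous_const) (by
      intro x _
      by_contra hne
      apply hp
      refine ⟨x, ?_⟩
      funext ξ
      by_contra hξ
      exact hne (mem_iUnion.2 ⟨ξ, hξ⟩))
  obtain ⟨δ, hδ⟩ := hΩ.bdd T hT
  refine ⟨δ, ?_⟩
  rintro _ ⟨x, rfl⟩ hag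
  obtain ⟨ξ, hξ, hx⟩ := mem_iUnion₂.1 (hTc (mem_univ x))
  exact hx (hag ξ (hδ ξ hξ)).symm

theorem alster0 {X : Type u} [TopologicalSpace X] (h : ProductivelyLindelofSp X)
    {Ω : Type} [LinearOrder Ω] [WellFoundedLT Ω] (hΩ : Om Ω)
    (e : X → Ω → unitInterval) (he : Continuous e)
    (O : Ω → ℕ → Set (Ω → unitInterval)) (s : Ω → Ω)
    (hO : ∀ β m, IsOpen (O β m))
    (hdep : ∀ β m p q, Agr (s β) p q → p ∈ O β m → q ∈ O β m)
    (hk : ∀ K ⊆ range e, IsCompact K → ∃ β, ∀ m, K ⊆ O β m)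
    (hs : ∀ β, β ≤ s β) :
    ∃ δ, ∀ x, ∃ β, s β ≤ δ ∧ ∀ m, e x ∈ O β m := by
  by_contra hcon
  push Not at hcon
  choose x hx using hcon
  have hcI : ∀ a : Ω, Countable (Iio a) := fun a =>
    ((hΩ.cnt a).mono Iio_subset_Iic_self).to_subtype
  have hcont : ∀ a : Ω, Continuous (fun p : Ω → unitInterval => (Iio a).domRestrict p) := by
    intro a
    exact continuous_pi fun i => continuous_apply _
  have hlev := level_exists h hΩ e he
  have hsig : ∀ δ : Ω, ∃ V : ℕ → Set (Iio δ → unitInterval), (∀ n, IsCompact (V n)) ∧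
      ⋃ n, V n = (Iio δ).domRestrict '' range e := by
    intro δ
    obtain ⟨V, hV, hVR⟩ := michael h hΩ (fun x => (Iio δ).domRestrict (e x)) ((hcont δ).comp he)
    refine ⟨V, hV, ?_⟩
    rw [hVR, ← range_comp]
    rfl
  let P : Set (Ω → unitInterval) :=
    {p | p ∉ range e ∧ ∀ β, (∃ x ∈ range e, Agr (s β) p x) → ∃ m, p ∉ O β m}
  haveI := hΩ.unc
  refine skel h e he P (fun x hh => hh.1 ⟨x, rfl⟩) x ?_
  intro W hW hPW
  have hnl : ¬ Large (range e) O s Wᶜ := by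
    intro hl
    obtain ⟨p, hpW, hp⟩ := fusion hΩ hO hdep hk hs hl hW.isClosed_compl hsig hlev
    exact hpW (hPW hp)
  obtain ⟨δ, hδ⟩ := not_large hnl
  have hop : IsOpen (((Iio δ).domRestrict '' Wᶜ)ᶜ : Set (Iio δ → unitInterval)) :=
    (hW.isClosed_compl.isCompact.image (hcont δ)).isClosed.isOpen_compl
  obtain ⟨V, hV, hVW⟩ := open_sigma hop
  have hVm : ∀ p, p ∉ ⋃ n, (Iio δ).domRestrict ⁻¹' V n ↔ ∃ q ∈ Wᶜ, Agr δ q p := by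
    intro p
    rw [← preimage_iUnion, hVW]
    simp only [mem_preimage, mem_compl_iff, not_not]
    constructor
    · rintro ⟨q, hq, hqp⟩
      exact ⟨q, hq, agr_iff.1 hqp⟩
    · rintro ⟨q, hq, hqp⟩
      exact ⟨q, hq, agr_iff.2 hqp⟩
  refine ⟨fun n => (Iio δ).domRestrict ⁻¹' V n,
    fun n => ((hV n).isClosed.preimage (hcont δ)).isCompact, ?_, ?_, ?_⟩
  · intro n p hp
    by_contra hpW
    exact (hVm p).2 ⟨p, hpW, fun _ _ => rfl⟩ (mem_iUnion.2 ⟨n, hp⟩)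
  · refine (hΩ.cnt δ).mono ?_
    intro i hi
    by_contra hlt
    simp only [mem_Iic, not_le] at hlt
    obtain ⟨q, hq, hqx⟩ := (hVm _).1 hi
    obtain ⟨β, hβ, hβm⟩ := hδ _ ⟨x i, rfl⟩ q hq hqx
    obtain ⟨m, hm⟩ := hx i β (hβ.trans hlt.le)
    exact hm (hβm m)
  · have hsat : P \ ⋃ n, (Iio δ).domRestrict ⁻¹' V n =
        (Iio δ).domRestrict ⁻¹' ((Iio δ).domRestrict '' (P \ ⋃ n, (Iio δ).domRestrict ⁻¹' V n)) := by
      apply subset_antisymm (subset_preimage_image _ _)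
      rintro p ⟨p', ⟨hp'P, hp'V⟩, hpp⟩
      have hag : Agr δ p' p := agr_iff.1 hpp
      obtain ⟨q, hq, hqp⟩ := (hVm _).1 hp'V
      have hex : ∀ x ∈ range e, ¬ Agr δ p' x := by
        intro x hx hpx
        obtain ⟨β, hβ, hβm⟩ := hδ x hx q hq (hqp.trans hpx)
        have h1 := (hpx.mono hβ)
        obtain ⟨m, hm⟩ := hp'P.2 β ⟨x, hx, h1⟩
        exact hm (hdep β m x p' h1.symm (hβm m))
      refine ⟨⟨fun hpR => hex p hpR hag, ?_⟩, (hVm _).2 ⟨q, hq, hqp.trans hag⟩⟩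
      rintro β ⟨x, hx, hpx⟩
      have hβ : s β ≤ δ := by
        by_contra hle
        exact hex x hx (hag.trans (hpx.mono (not_le.1 hle).le))
      obtain ⟨m, hm⟩ := hp'P.2 β ⟨x, hx, (hag.mono hβ).trans hpx⟩
      exact ⟨m, fun hpm => hm (hdep β m p p' (hag.mono hβ).symm hpm)⟩
    rw [hsat]
    exact perfect_lindelof _ (hcont δ) _

/-- Alster's theorem -/
theorem alster {X : Type u} [TopologicalSpace X] (h : ProductivelyLindelofSp X)
    {Ω : Type} [LinearOrder Ω] [WellFoundedLT Ω] (hΩ : Om Ω)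
    (e : X → Ω → unitInterval) (he : Continuous e) {κ : Type} (hκ : #κ ≤ 𝔠)
    (O : κ → ℕ → Set (Ω → unitInterval))
    (hO : ∀ β m, IsOpen (O β m))
    (hdep : ∀ β m, ∃ S : Set Ω, S.Countable ∧ ∀ p q : Ω → unitInterval,
      (∀ ξ ∈ S, p ξ = q ξ) → p ∈ O β m → q ∈ O β m)
    (hk : ∀ K ⊆ range e, IsCompact K → ∃ β, ∀ m, K ⊆ O β m) :
    ∃ T : Set κ, T.Countable ∧ ∀ x, ∃ β ∈ T, ∀ m, e x ∈ O β m := by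
  choose S hS hSd using hdep
  have hb : ∀ k, ∃ b, ∀ ξ ∈ ⋃ m, S k m, ξ < b := fun k => hΩ.bdd _ (countable_iUnion (hS k))
  choose b hb using hb
  obtain ⟨k0, -⟩ := hk ∅ (empty_subset _) isCompact_empty
  obtain ⟨g, hg⟩ := hΩ.sur κ hκ ⟨k0⟩
  obtain ⟨δ, hδ⟩ := alster0 h hΩ e he (fun β => O (g β)) (fun β => max β (b (g β)))
    (fun β m => hO _ m) (by
      intro β m p q hpq hp
      refine hSd _ m p q (fun ξ hξ => hpq ξ ?_) hp
      exact (hb _ ξ (mem_iUnion.2 ⟨m, hξ⟩)).trans_le (le_max_right _ _)) (by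
      intro K hKR hK
      obtain ⟨k, hk⟩ := hk K hKR hK
      obtain ⟨β, rfl⟩ := hg k
      exact ⟨β, hk⟩) (fun β => le_max_left _ _)
  refine ⟨g '' Iic δ, (hΩ.cnt δ).image g, fun x => ?_⟩
  obtain ⟨β, hβ, hx⟩ := hδ x
  exact ⟨g β, ⟨β, (le_max_left _ _).trans hβ, rfl⟩, hx⟩

/-- basic sets -/
def Ob {Ω : Type} (φ : ℕ → Finset (Finset Ω)) (n : ℕ) : Set (Ω → unitInterval) :=
  ⋃ s ∈ φ n, ⋂ ξ ∈ s, {p | p ξ ≠ 1}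

theorem Ob_open {Ω : Type} (φ : ℕ → Finset (Finset Ω)) (n : ℕ) : IsOpen (Ob φ n) := by
  refine isOpen_biUnion fun s _ => isOpen_biInter_finset fun ξ _ => ?_
  exact isOpen_ne_fun (continuous_apply ξ) continuous_const

theorem Ob_dep {Ω : Type} (φ : ℕ → Finset (Finset Ω)) (n : ℕ) :
    ∃ S : Set Ω, S.Countable ∧ ∀ p q : Ω → unitInterval,
      (∀ ξ ∈ S, p ξ = q ξ) → p ∈ Ob φ n → q ∈ Ob φ n := by
  refine ⟨⋃ s ∈ φ n, (s : Set Ω), (φ n).countable_toSet.biUnion fun s _ => s.countable_toSet, ?_⟩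
  intro p q hpq hp
  obtain ⟨s, hs, hps⟩ := mem_iUnion₂.1 hp
  refine mem_biUnion hs ?_
  refine mem_iInter₂.2 fun ξ hξ => ?_
  have h1 : p ξ ≠ 1 := mem_iInter₂.1 hps ξ hξ
  rw [hpq ξ (mem_biUnion hs hξ)] at h1
  exact h1

/-- Gdelta sets -/
def Gd {Ω : Type} (φ : ℕ → Finset (Finset Ω)) : Set (Ω → unitInterval) := ⋂ n, Ob φ n

theorem Gd_inter {Ω : Type} (f : ℕ → ℕ → Finset (Finset Ω)) :
    ∃ ψ, Gd ψ = ⋂ k, Gd (f k) := by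
  refine ⟨fun n => f n.unpair.1 n.unpair.2, ?_⟩
  ext p
  simp only [Gd, mem_iInter]
  constructor
  · intro h k n
    have := h (Nat.pair k n)
    simpa [Ob] using this
  · intro h n
    exact h n.unpair.1 n.unpair.2

theorem Gd_univ {Ω : Type} : Gd (fun _ => ({∅} : Finset (Finset Ω))) = Set.univ := by
  ext p; simp [Gd, Ob]

theorem Gd_empty {Ω : Type} : Gd (fun _ => (∅ : Finset (Finset Ω))) = ∅ := by
  ext p; simp [Gd, Ob]

theorem card_phi {Ω : Type} (hc : #Ω ≤ 𝔠) : #(ℕ → Finset (Finset Ω)) ≤ 𝔠 := by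
  have h1 : ∀ α : Type, #α ≤ 𝔠 → #(Finset α) ≤ 𝔠 := by
    intro α hα
    rcases finite_or_infinite α with hf | hf
    · exact (Cardinal.mk_le_aleph0 (α := Finset α)).trans Cardinal.aleph0_le_continuum
    · rw [Cardinal.mk_finset_of_infinite]; exact hα
  calc #(ℕ → Finset (Finset Ω)) = #(Finset (Finset Ω)) ^ ℵ₀ := by simp
    _ ≤ 𝔠 ^ ℵ₀ := Cardinal.power_le_power_right (h1 _ (h1 _ hc))
    _ = 𝔠 := Cardinal.continuum_power_aleph0

theorem thmB {X : Type u} [TopologicalSpace X] (h : ProductivelyLindelofSp X)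
    {Ω : Type} [LinearOrder Ω] [WellFoundedLT Ω] (hΩ : Om Ω) (hc : #Ω ≤ 𝔠)
    (e : X → Ω → unitInterval) (he : Continuous e) {κ : Type}
    (F : κ → Finset ℕ) (ξ : κ → ℕ → Ω)
    (hcov : ∀ z : ℕ → X, ∃ c, ∀ n ∈ F c, e (z n) (ξ c n) ≠ 1) :
    ∃ T : Set κ, T.Countable ∧ ∀ z : ℕ → X, ∃ c ∈ T, ∀ n ∈ F c, e (z n) (ξ c n) ≠ 1 := by
  classical
  rcases isEmpty_or_nonempty X with hX | hX
  · exact ⟨∅, countable_empty, fun z => hX.elim (z 0)⟩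
  by_contra hno
  let Good : ℕ → (ℕ → ℕ → Finset (Finset Ω)) → Prop := fun m g =>
    ∃ T : Set κ, T.Countable ∧ ∀ z : ℕ → X, (∀ i < m, e (z i) ∈ Gd (g i)) →
      ∃ c ∈ T, ∀ n ∈ F c, e (z n) (ξ c n) ≠ 1
  let P : ℕ → (ℕ → Set (Ω → unitInterval)) → Prop := fun m K =>
    ∀ g, (∀ i < m, K i ⊆ Gd (g i)) → ¬ Good m g
  have hP0 : ∀ K, P 0 K := by
    rintro K g - ⟨T, hT, hTz⟩
    exact hno ⟨T, hT, fun z => hTz z (by simp)⟩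
  have hstep : ∀ m K, ∃ L, IsCompact L ∧ L ⊆ range e ∧ (P m K → P (m+1) (Function.update K m L)) := by
    intro m K
    by_contra hcon
    push Not at hcon
    have hPm : P m K := (hcon ∅ isCompact_empty (empty_subset _)).1
    have key : ∀ L, IsCompact L → L ⊆ range e → ∃ g : ℕ → ℕ → Finset (Finset Ω),
        L ⊆ Gd (g m) ∧ (∀ i < m, K i ⊆ Gd (g i)) ∧ Good (m+1) g := by
      intro L hL hLR
      have := (hcon L hL hLR).2
      simp only [P, not_forall, not_not] at this
      obtain ⟨g, hg, hgood⟩ := this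
      refine ⟨g, ?_, ?_, hgood⟩
      · simpa using hg m (Nat.lt_succ_self m)
      · intro i hi
        have := hg i (hi.trans (Nat.lt_succ_self m))
        rwa [Function.update_of_ne hi.ne] at this
    let I := {φ : ℕ → Finset (Finset Ω) // ∃ g : ℕ → ℕ → Finset (Finset Ω), g m = φ ∧
      (∀ i < m, K i ⊆ Gd (g i)) ∧ Good (m+1) g}
    obtain ⟨T, hT, hTx⟩ := alster h hΩ e he (κ := I) ((mk_subtype_le _).trans (card_phi hc))
      (fun φ n => Ob φ.1 n) (fun φ n => Ob_open _ n) (fun φ n => Ob_dep _ n) (by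
        intro L hLR hL
        obtain ⟨g, h1, h2, h3⟩ := key L hL hLR
        exact ⟨⟨g m, g, rfl, h2, h3⟩, fun n => h1.trans (iInter_subset _ n)⟩)
    have hTne : T.Nonempty := by
      obtain ⟨x⟩ := hX
      obtain ⟨β, hβ, -⟩ := hTx x
      exact ⟨β, hβ⟩
    obtain ⟨t, ht⟩ := hT.exists_eq_range hTne
    choose g hgm hgK hgG using fun k => (t k).2
    choose g' hg' using fun i => Gd_inter (fun k => g k i)
    choose T' hT' hT'z using hgG
    refine hPm g' ?_ ⟨⋃ k, T' k, countable_iUnion hT', ?_⟩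
    · intro i hi
      rw [hg']
      exact subset_iInter fun k => hgK k i hi
    · intro z hz
      obtain ⟨β, hβ, hzβ⟩ := hTx (z m)
      rw [ht] at hβ
      obtain ⟨k, rfl⟩ := hβ
      obtain ⟨c, hc, hcz⟩ := hT'z k z (by
        intro i hi
        rcases Nat.lt_succ_iff_lt_or_eq.1 hi with hi | rfl
        · have := hz i hi
          rw [hg'] at this
          exact mem_iInter.1 this k
        · rw [hgm k]
          exact mem_iInter.2 hzβ)
      exact ⟨c, mem_iUnion.2 ⟨k, hc⟩, hcz⟩
  choose ext hext1 hext2 hext3 using hstep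
  let s : ℕ → ℕ → Set (Ω → unitInterval) := fun m =>
    Nat.rec (fun _ => ∅) (fun m K => Function.update K m (ext m K)) m
  have hs : ∀ m, s (m+1) = Function.update (s m) m (ext m (s m)) := fun m => rfl
  have hPs : ∀ m, P m (s m) := by
    intro m
    induction m with
    | zero => exact hP0 _
    | succ m ih => rw [hs]; exact hext3 m _ ih
  let K : ℕ → Set (Ω → unitInterval) := fun i => ext i (s i)
  have hsK : ∀ m i, i < m → s m i = K i := by
    intro m
    induction m with
    | zero => intro i hi; omega
    | succ m ih =>
      intro i hi
      rw [hs]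
      rcases Nat.lt_succ_iff_lt_or_eq.1 hi with hi | rfl
      · rw [Function.update_of_ne hi.ne, ih i hi]
      · rw [Function.update_self]
  have hPK : ∀ m, P m K := by
    intro m g hg
    exact hPs m g (fun i hi => by rw [hsK m i hi]; exact hg i hi)
  have hKne : ∀ i, (K i).Nonempty := by
    intro i
    by_contra hne
    rw [not_nonempty_iff_eq_empty] at hne
    refine hPK (i+1) (Function.update (fun _ _ => {∅}) i (fun _ => ∅)) ?_ ?_
    · intro j hj
      rcases eq_or_ne j i with rfl | hji
      · rw [hne]; exact empty_subset _
      · rw [Function.update_of_ne hji, Gd_univ]; exact subset_univ _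
    · refine ⟨∅, countable_empty, fun z hz => ?_⟩
      have := hz i (Nat.lt_succ_self i)
      rw [Function.update_self, Gd_empty] at this
      exact this.elim
  choose x0 hx0 using hKne
  have hcomp : IsCompact (Set.pi Set.univ K) := isCompact_univ_pi fun i => hext1 i _
  obtain ⟨Fs, hFs⟩ := hcomp.elim_finite_subcover
    (fun c : κ => {p : ℕ → Ω → unitInterval | ∀ n ∈ F c, p n (ξ c n) ≠ 1}) (by
      intro c
      have : {p : ℕ → Ω → unitInterval | ∀ n ∈ F c, p n (ξ c n) ≠ 1} =
        ⋂ n ∈ F c, {p : ℕ → Ω → unitInterval | p n (ξ c n) ≠ 1} := by ext p; simp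
      rw [this]
      refine isOpen_biInter_finset fun n _ => ?_
      exact isOpen_ne_fun (by fun_prop) continuous_const) (by
      intro p hp
      choose z hz using fun n => hext2 n _ (hp n (mem_univ n))
      obtain ⟨c, hc⟩ := hcov z
      refine mem_iUnion.2 ⟨c, fun n hn => ?_⟩
      rw [← hz n]
      exact hc n hn)
  let m : ℕ := (Fs.biUnion F).sup id + 1
  have hm : ∀ c ∈ Fs, ∀ n ∈ F c, n < m := by
    intro c hc n hn
    exact Nat.lt_succ_of_le (Finset.le_sup (f := id) (Finset.mem_biUnion.2 ⟨c, hc, hn⟩))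
  let A : Finset Ω := Fs.biUnion fun c => (F c).image (ξ c)
  have hA : ∀ c ∈ Fs, ∀ n ∈ F c, ξ c n ∈ A := by
    intro c hc n hn
    exact Finset.mem_biUnion.2 ⟨c, hc, Finset.mem_image_of_mem _ hn⟩
  refine hPK m (fun i _ => A.powerset.filter fun S => ∃ x ∈ K i, S = A.filter fun η => x η ≠ 1)
    ?_ ⟨Fs, Fs.countable_toSet, ?_⟩
  · intro i _ x hx
    refine mem_iInter.2 fun n => mem_iUnion₂.2 ⟨A.filter fun η => x η ≠ 1, ?_, ?_⟩
    · simp only [Finset.mem_filter, Finset.mem_powerset]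
      exact ⟨Finset.filter_subset _ _, x, hx, rfl⟩
    · refine mem_iInter₂.2 fun η hη => (Finset.mem_filter.1 hη).2
  · intro z hz
    have hx : ∀ i, ∃ x ∈ K i, i < m → ∀ η ∈ A, x η ≠ 1 → e (z i) η ≠ 1 := by
      intro i
      by_cases hi : i < m
      · obtain ⟨S, hS, hzS⟩ := mem_iUnion₂.1 (mem_iInter.1 (hz i hi) 0)
        simp only [Finset.mem_filter, Finset.mem_powerset] at hS
        obtain ⟨-, x, hx, rfl⟩ := hS
        exact ⟨x, hx, fun _ η hη hne => mem_iInter₂.1 hzS η (Finset.mem_filter.2 ⟨hη, hne⟩)⟩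
      · exact ⟨x0 i, hx0 i, fun hh => (hi hh).elim⟩
    choose x hxK hxz using hx
    obtain ⟨c, hc, hxc⟩ := mem_iUnion₂.1 (hFs (show x ∈ Set.pi Set.univ K from fun i _ => hxK i))
    exact ⟨c, hc, fun n hn => hxz n (hm c hc n hn) _ (hA c hc n hn) (hxc n hn)⟩

theorem thmB' {X : Type u} [TopologicalSpace X] (h : ProductivelyLindelofSp X)
    {Ω : Type} [LinearOrder Ω] [WellFoundedLT Ω] (hΩ : Om Ω) (hc : #Ω ≤ 𝔠)
    {κ : Type} (hκ : #κ ≤ 𝔠)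
    (F : κ → Finset ℕ) (ψ : κ → ℕ → C(X, unitInterval))
    (hcov : ∀ z : ℕ → X, ∃ c, ∀ n ∈ F c, ψ c n (z n) ≠ 1) :
    ∃ T : Set κ, T.Countable ∧ ∀ z : ℕ → X, ∃ c ∈ T, ∀ n ∈ F c, ψ c n (z n) ≠ 1 := by
  rcases isEmpty_or_nonempty κ with hk | hk
  · exact ⟨∅, countable_empty, fun z => hk.elim (hcov z).choose⟩
  obtain ⟨g, hg⟩ := hΩ.sur (κ × ℕ) (by
    rw [mk_prod, lift_id, lift_id, mk_nat]
    exact (mul_le_mul' hκ aleph0_le_continuum).trans continuum_mul_self.le) inferInstance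
  choose ξ hξ using fun (c : κ) (n : ℕ) => hg (c, n)
  obtain ⟨T, hT, hTz⟩ := thmB h hΩ hc (fun x η => ψ (g η).1 (g η).2 x)
    (continuous_pi fun η => (ψ _ _).continuous) F ξ (by simpa [hξ] using hcov)
  exact ⟨T, hT, by simpa [hξ] using hTz⟩

theorem thmC {X : Type u} [TopologicalSpace X] (h : ProductivelyLindelofSp X)
    {Ω : Type} [LinearOrder Ω] [WellFoundedLT Ω] (hΩ : Om Ω) (hc : #Ω ≤ 𝔠)
    (d : ℕ → X) (hd : DenseRange d)
    {J : Type v} (F : J → Finset ℕ) (ψ : J → ℕ → C(X, unitInterval))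
    (hcov : ∀ z : ℕ → X, ∃ c, ∀ n ∈ F c, ψ c n (z n) ≠ 1) :
    ∃ T : Set J, T.Countable ∧ ∀ z : ℕ → X, ∃ c ∈ T, ∀ n ∈ F c, ψ c n (z n) ≠ 1 := by
  let key : J → Finset ℕ × (ℕ → ℕ → unitInterval) := fun j => (F j, fun n m => ψ j n (d m))
  have hU : #unitInterval ≤ 𝔠 := (mk_subtype_le _).trans mk_real.le
  have hκ : #(range key) ≤ 𝔠 := by
    refine (mk_subtype_le _).trans ?_
    rw [mk_prod, lift_id, lift_id]
    refine (mul_le_mul' (mk_le_aleph0.trans aleph0_le_continuum) ?_).trans continuum_mul_self.le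
    calc #(ℕ → ℕ → unitInterval) = (#unitInterval ^ ℵ₀) ^ ℵ₀ := by simp
      _ ≤ (𝔠 ^ ℵ₀) ^ ℵ₀ := power_le_power_right (power_le_power_right hU)
      _ = 𝔠 := by rw [continuum_power_aleph0, continuum_power_aleph0]
  choose j hj using fun k : range key => k.2
  have heq : ∀ i, F (j ⟨key i, i, rfl⟩) = F i ∧ ∀ n, ψ (j ⟨key i, i, rfl⟩) n = ψ i n := by
    intro i
    have := hj ⟨key i, i, rfl⟩
    refine ⟨congrArg Prod.fst this, fun n => ?_⟩
    apply DFunLike.coe_injective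
    refine hd.equalizer (ψ _ n).continuous (ψ i n).continuous ?_
    funext m
    exact congrFun (congrFun (congrArg Prod.snd this) n) m
  obtain ⟨T, hT, hTz⟩ := thmB' h hΩ hc hκ (fun k => F (j k)) (fun k => ψ (j k)) (by
    intro z
    obtain ⟨c, hc⟩ := hcov z
    refine ⟨⟨key c, c, rfl⟩, ?_⟩
    simp only [(heq c).1, (heq c).2]
    exact hc)
  refine ⟨j '' T, hT.image j, fun z => ?_⟩
  obtain ⟨k, hk, hkz⟩ := hTz z
  exact ⟨j k, mem_image_of_mem j hk, hkz⟩

theorem exists_Om (hCH : (𝔠 : Cardinal.{0}) = ℵ₁) :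
    ∃ (Ω : Type) (_ : LinearOrder Ω) (_ : WellFoundedLT Ω), Om Ω ∧ #Ω ≤ 𝔠 := by
  refine ⟨(ℵ₁ : Cardinal.{0}).ord.ToType, inferInstance, inferInstance, ?_, ?_⟩
  · have hcard : #(ℵ₁ : Cardinal.{0}).ord.ToType = ℵ₁ := by simp
    have hlt : ∀ a : (ℵ₁ : Cardinal.{0}).ord.ToType, (Iio a).Countable := by
      intro a
      have := mk_Iio_ord_toType a
      rw [← le_aleph0_iff_set_countable]
      exact Order.lt_succ_iff.1 (this.trans_eq succ_aleph0.symm)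
    have hcnt : ∀ a : (ℵ₁ : Cardinal.{0}).ord.ToType, (Iic a).Countable := by
      intro a
      rw [← Iio_insert]
      exact (hlt a).insert a
    refine ⟨hcnt, ?_, ?_⟩
    · intro S hS
      by_contra hcon
      push Not at hcon
      have : (Set.univ : Set (ℵ₁ : Cardinal.{0}).ord.ToType).Countable := by
        refine (hS.biUnion fun a _ => hcnt a).mono ?_
        intro b _
        obtain ⟨a, ha, hba⟩ := hcon b
        exact mem_biUnion ha hba
      rw [← le_aleph0_iff_set_countable, mk_univ, hcard, ← succ_aleph0] at this
      exact (Order.lt_succ ℵ₀).not_ge this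
    · intro κ hκ hne
      rw [hCH, ← hcard] at hκ
      obtain ⟨f⟩ := hκ
      exact ⟨Function.invFun f, Function.invFun_surjective f.injective⟩
  · rw [hCH]; simp

theorem thmD {X : Type u} [TopologicalSpace X] (h : ProductivelyLindelofSp X)
    (ht : CountableTightness X)
    {Ω : Type} [LinearOrder Ω] [WellFoundedLT Ω] (hΩ : Om Ω) (hc : #Ω ≤ 𝔠)
    {J : Type v} (F : J → Finset ℕ) (ψ : J → ℕ → C(X, unitInterval))
    (hcov : ∀ z : ℕ → X, ∃ c, ∀ n ∈ F c, ψ c n (z n) ≠ 1) :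
    ∃ T : Set J, T.Countable ∧ ∀ z : ℕ → X, ∃ c ∈ T, ∀ n ∈ F c, ψ c n (z n) ≠ 1 := by
  classical
  rcases isEmpty_or_nonempty X with hX | hX
  · exact ⟨∅, countable_empty, fun z => hX.elim (z 0)⟩
  obtain ⟨x0⟩ := hX
  let B : J → Set (ℕ → X) := fun c => {z | ∀ n ∈ F c, ψ c n (z n) ≠ 1}
  let res : ∀ Z : Set X, C(X, unitInterval) → C(Z, unitInterval) := fun Z f => f.restrict Z
  have hu : ∀ a : ℕ → X, ∃ u : ℕ → J, ∀ z : ℕ → X, (∀ n, z n ∈ closure (range a)) →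
      ∃ k, z ∈ B (u k) := by
    intro a
    let Z := closure (range a)
    obtain ⟨T, hT, hTz⟩ := thmC (prod_closed h (isClosed_closure (s := range a))) hΩ hc
      (fun n => (⟨a n, subset_closure ⟨n, rfl⟩⟩ : Z)) (by
        intro z
        rw [closure_subtype, ← range_comp]
        exact z.2) F (fun c n => res Z (ψ c n)) (fun z => hcov (fun n => z n))
    have hTne : T.Nonempty := by
      obtain ⟨c, hc, -⟩ := hTz (fun _ => ⟨a 0, subset_closure ⟨0, rfl⟩⟩)
      exact ⟨c, hc⟩
    obtain ⟨t, ht⟩ := hT.exists_eq_range hTne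
    refine ⟨t, fun z hz => ?_⟩
    obtain ⟨c, hc, hcz⟩ := hTz (fun n => ⟨z n, hz n⟩)
    rw [ht] at hc
    obtain ⟨k, rfl⟩ := hc
    exact ⟨k, hcz⟩
  choose u hu using hu
  have hpt : ∀ q : ℕ → J, ∃ p : ℕ → X, (∃ k, p ∈ B (q k)) → ∀ z : ℕ → X, ∃ k, z ∈ B (q k) := by
    intro q
    by_cases hq : ∀ z : ℕ → X, ∃ k, z ∈ B (q k)
    · exact ⟨fun _ => x0, fun _ => hq⟩
    · push Not at hq
      obtain ⟨p, hp⟩ := hq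
      exact ⟨p, fun ⟨k, hk⟩ => (hp k hk).elim⟩
  choose pt hpt using hpt
  let ar : Option ((ℕ → ℕ) × ℕ) → Type := fun o => Option.rec Empty (fun _ => ℕ) o
  let W := WType ar
  have hα : #(Option ((ℕ → ℕ) × ℕ)) ≤ 𝔠 := by
    rw [mk_option, mk_prod, lift_id, lift_id]
    have : #(ℕ → ℕ) = 𝔠 := by simp
    rw [this, mk_nat]
    rw [continuum_mul_aleph0]
    exact (add_le_add_right (one_le_aleph0.trans aleph0_le_continuum) _).trans continuum_add_self.le
  have hW : #W ≤ 𝔠 := by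
    apply WType.cardinalMk_le_of_le
    have : ∀ a, (𝔠 : Cardinal.{0}) ^ #(ar a) ≤ 𝔠 := by
      rintro (_ | a)
      · have : #(ar none) = 0 := mk_eq_zero_iff.2 (inferInstanceAs (IsEmpty Empty))
        rw [this, power_zero]
        exact one_le_aleph0.trans aleph0_le_continuum
      · have : #(ar (some a)) = ℵ₀ := mk_nat
        rw [this, continuum_power_aleph0]
    calc Cardinal.sum (fun a => (𝔠 : Cardinal.{0}) ^ #(ar a)) ≤ Cardinal.sum (fun _ : Option ((ℕ → ℕ) × ℕ) => (𝔠 : Cardinal.{0})) :=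
          Cardinal.sum_le_sum _ _ this
      _ = #(Option ((ℕ → ℕ) × ℕ)) * 𝔠 := by simp
      _ ≤ 𝔠 * 𝔠 := mul_le_mul' hα le_rfl
      _ = 𝔠 := continuum_mul_self
  let alg : (Σ a, (ar a → X)) → X := fun p => match p with
    | ⟨none, _⟩ => x0
    | ⟨some (k, j), c⟩ => pt (fun n => u (fun i => c (Nat.pair n i)) (k n)) j
  let ev : W → X := WType.elim X alg
  have hev : ∀ (k : ℕ → ℕ) (j : ℕ) (c : ℕ → W),
      ev (WType.mk (some (k, j)) c) = pt (fun n => u (fun i => ev (c (Nat.pair n i))) (k n)) j :=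
    fun k j c => rfl
  let w0 : W := WType.mk none (fun x => Empty.elim x)
  let Z := closure (range ev)
  have hZc : ∀ z : ℕ → X, (∀ n, z n ∈ Z) → ∃ c : (ℕ → W) × ℕ, z ∈ B (u (ev ∘ c.1) c.2) := by
    intro z hz
    choose A hAS hAc hzA using fun n => ht (range ev) (z n) (hz n)
    have h1 : (⋃ n, A n ∪ {ev w0}).Countable :=
      countable_iUnion fun n => (hAc n).union (countable_singleton _)
    obtain ⟨a, ha⟩ := h1.exists_eq_range ⟨ev w0, mem_iUnion.2 ⟨0, Or.inr rfl⟩⟩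
    have h2 : ∀ i, ∃ w, ev w = a i := by
      intro i
      have : a i ∈ ⋃ n, A n ∪ {ev w0} := by rw [ha]; exact ⟨i, rfl⟩
      obtain ⟨n, hn | hn⟩ := mem_iUnion.1 this
      · exact hAS n hn
      · exact ⟨w0, hn.symm⟩
    choose w hw using h2
    have hwa : ev ∘ w = a := funext hw
    obtain ⟨k, hk⟩ := hu (ev ∘ w) z (by
      intro n
      rw [hwa, ← ha]
      exact closure_mono (fun x hx => mem_iUnion.2 ⟨n, Or.inl hx⟩) (hzA n))
    exact ⟨(w, k), hk⟩
  obtain ⟨T, hT, hTz⟩ := thmB' (prod_closed h (isClosed_closure (s := range ev))) hΩ hc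
    (κ := (ℕ → W) × ℕ) (by
      rw [mk_prod, lift_id, lift_id, mk_nat]
      have : #(ℕ → W) ≤ 𝔠 := by
        calc #(ℕ → W) = #W ^ ℵ₀ := by simp
          _ ≤ 𝔠 ^ ℵ₀ := power_le_power_right hW
          _ = 𝔠 := continuum_power_aleph0
      exact (mul_le_mul' this aleph0_le_continuum).trans continuum_mul_self.le)
    (fun c => F (u (ev ∘ c.1) c.2)) (fun c n => res Z (ψ (u (ev ∘ c.1) c.2) n))
    (fun z => hZc (fun n => z n) (fun n => (z n).2))
  have hTne : T.Nonempty := by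
    obtain ⟨c, hc, -⟩ := hTz (fun _ => ⟨ev w0, subset_closure ⟨w0, rfl⟩⟩)
    exact ⟨c, hc⟩
  obtain ⟨t, ht'⟩ := hT.exists_eq_range hTne
  let q : ℕ → J := fun n => u (ev ∘ (t n).1) (t n).2
  have hptS : ∀ j, pt q j ∈ Z := by
    intro j
    refine subset_closure ⟨WType.mk (some (fun n => (t n).2, j))
      (fun m : ℕ => (t m.unpair.1).1 m.unpair.2), ?_⟩
    rw [hev]
    simp only [Nat.unpair_pair]
    rfl
  have hcovq : ∀ z : ℕ → X, ∃ k, z ∈ B (q k) := by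
    apply hpt q
    obtain ⟨c, hc, hcz⟩ := hTz (fun n => ⟨pt q n, hptS n⟩)
    rw [ht'] at hc
    obtain ⟨k, rfl⟩ := hc
    exact ⟨k, hcz⟩
  refine ⟨range q, countable_range q, fun z => ?_⟩
  obtain ⟨k, hk⟩ := hcovq z
  exact ⟨q k, ⟨k, rfl⟩, hk⟩

/-- Under CH, every productively Lindelöf space of countable
tightness is powerfully Lindelöf. -/
theorem stmt0 (hCH : Cardinal.continuum = Cardinal.aleph 1)
    (X : Type u) [TopologicalSpace X]
    (hprod : ProductivelyLindelofSp X) (ht : CountableTightness X) :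
    PowerfullyLindelofSp X := by
  classical
  have hCH0 : (𝔠 : Cardinal.{0}) = ℵ₁ := by
    apply Cardinal.lift_injective
    simpa using hCH
  obtain ⟨Ω, _, _, hΩ, hc⟩ := exists_Om hCH0
  obtain ⟨h1, h2, h3⟩ := prod_eng hprod
  have hL : LindelofSpace X := quasi_iff.1 h3
  have h4 : T3Space X := { }
  refine ⟨inferInstance, inferInstance, ?_⟩
  intro 𝒰 hU hUc
  let J := {p : Finset ℕ × (ℕ → C(X, unitInterval)) //
    ∃ U ∈ 𝒰, {z : ℕ → X | ∀ n ∈ p.1, p.2 n (z n) ≠ 1} ⊆ U}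
  obtain ⟨T, hT, hTz⟩ := thmD hprod ht hΩ hc (J := J) (fun p => p.1.1) (fun p => p.1.2) (by
    intro z
    obtain ⟨U, hUU, hzU⟩ := mem_sUnion.1 (hUc.symm ▸ mem_univ z : z ∈ ⋃₀ 𝒰)
    obtain ⟨I, V, hV, hVU⟩ := isOpen_pi_iff.1 (hU U hUU) z hzU
    have hf : ∀ n, ∃ f : C(X, unitInterval), n ∈ I → f (z n) = 0 ∧ ∀ x ∉ V n, f x = 1 := by
      intro n
      by_cases hn : n ∈ I
      · obtain ⟨f, hf, hf0, hf1⟩ := CompletelyRegularSpace.completely_regular (z n) (V n)ᶜ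
          (hV n hn).1.isClosed_compl (by simpa using (hV n hn).2)
        exact ⟨⟨f, hf⟩, fun _ => ⟨hf0, fun x hx => hf1 hx⟩⟩
      · exact ⟨ContinuousMap.const _ 0, fun hh => (hn hh).elim⟩
    choose f hf using hf
    refine ⟨⟨(I, f), U, hUU, ?_⟩, ?_⟩
    · intro y hy
      apply hVU
      intro n hn
      by_contra hyn
      exact hy n hn ((hf n hn).2 _ hyn)
    · intro n hn
      change f n (z n) ≠ 1
      rw [(hf n hn).1]
      exact zero_ne_one)
  choose G hG hGs using fun p : J => p.2
  refine ⟨G '' T, ?_, hT.image G, ?_⟩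
  · rintro _ ⟨p, -, rfl⟩
    exact hG p
  · refine eq_univ_of_forall fun z => ?_
    obtain ⟨c, hc, hcz⟩ := hTz z
    exact mem_sUnion.2 ⟨G c, mem_image_of_mem G hc, hGs c hcz⟩
end

section
/- Assume the Continuum Hypothesis. If X is a productively Lindelöf sequential topological space, then X is powerfully Lindelöf. -/
open Set Cardinal Topology

universe u v

namespace PL

section
variable {I : Type} [LinearOrder I]

def Sat (γ : I) (A : Set (I → unitInterval)) : Prop :=
  ∀ k k', (∀ i < γ, k i = k' i) → k ∈ A → k' ∈ A

def sat (γ : I) (A : Set (I → unitInterval)) : Set (I → unitInterval) :=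
  {k | ∃ c ∈ A, ∀ i < γ, c i = k i}

theorem sat_sat (γ : I) (A : Set (I → unitInterval)) : Sat γ (sat γ A) := by
  rintro k k' h ⟨c, hc, h2⟩
  exact ⟨c, hc, fun i hi => (h2 i hi).trans (h i hi)⟩

theorem subset_sat (γ : I) (A : Set (I → unitInterval)) : A ⊆ sat γ A :=
  fun k hk => ⟨k, hk, fun _ _ => rfl⟩

theorem Sat.mono {γ δ : I} (h : γ ≤ δ) {A : Set (I → unitInterval)} (hA : Sat γ A) : Sat δ A :=
  fun k k' hk => hA k k' fun i hi => hk i (hi.trans_le h)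

theorem sat_anti {γ δ : I} (h : γ ≤ δ) (A : Set (I → unitInterval)) : sat δ A ⊆ sat γ A := by
  rintro k ⟨c, hc, h2⟩
  exact ⟨c, hc, fun i hi => h2 i (hi.trans_le h)⟩

theorem Sat.sat_subset {γ : I} {A B : Set (I → unitInterval)} (hB : Sat γ B) (h : A ⊆ B) :
    sat γ A ⊆ B := by
  rintro k ⟨c, hc, h2⟩
  exact hB c k h2 (h hc)

theorem Sat.compl {γ : I} {A : Set (I → unitInterval)} (hA : Sat γ A) : Sat γ Aᶜ :=
  fun k k' h hk hk' => hk (hA k' k (fun i hi => (h i hi).symm) hk')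

theorem Sat.inter {γ : I} {A B : Set (I → unitInterval)} (hA : Sat γ A) (hB : Sat γ B) :
    Sat γ (A ∩ B) :=
  fun k k' h hk => ⟨hA k k' h hk.1, hB k k' h hk.2⟩

theorem Sat.empty (γ : I) : Sat γ (∅ : Set (I → unitInterval)) := fun _ _ _ h => h

def pr (γ : I) (k : I → unitInterval) : Iio γ → unitInterval := fun i => k i

theorem continuous_pr (γ : I) : Continuous (pr γ) := by unfold pr; fun_prop

theorem pr_eq {γ : I} {k k' : I → unitInterval} : pr γ k = pr γ k' ↔ ∀ i < γ, k i = k' i := by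
  constructor
  · intro h i hi
    exact congrFun h ⟨i, hi⟩
  · intro h
    funext i
    exact h i i.2

theorem isClosed_sat (γ : I) {A : Set (I → unitInterval)} (hA : IsClosed A) :
    IsClosed (sat γ A) := by
  have : sat γ A = pr γ ⁻¹' (pr γ '' A) := by
    ext k
    simp only [sat, mem_ofPred_eq, mem_preimage, mem_image, pr_eq]
  rw [this]
  exact ((hA.isCompact.image (continuous_pr γ)).isClosed).preimage (continuous_pr γ)

def mix (γ : I) (k q : I → unitInterval) : I → unitInterval :=
  fun i => if i < γ then k i else q i

theorem mix_lt {γ : I} {k q : I → unitInterval} : ∀ i < γ, k i = mix γ k q i :=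
  fun i hi => by simp [mix, hi]

theorem Sat.closure {γ : I} {A : Set (I → unitInterval)} (hA : Sat γ A) : Sat γ (closure A) := by
  intro k k' h hk
  have hc : Continuous (fun x => mix γ x k') := by
    refine continuous_pi fun i => ?_
    unfold mix
    by_cases hi : i < γ
    · simp only [hi, if_true]; fun_prop
    · simp only [hi, if_false]; fun_prop
  have e : mix γ k k' = k' := by
    funext i
    by_cases hi : i < γ
    · simp [mix, hi, h i hi]
    · simp [mix, hi]
  have h2 : MapsTo (fun x => mix γ x k') A A := fun x hx => hA x _ mix_lt hx
  have := h2.closure hc hk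
  exact e ▸ this

theorem Sat.isLindelof {γ : I} (hγ : (Iio γ).Countable) {A : Set (I → unitInterval)}
    (hA : Sat γ A) : IsLindelof A := by
  have : Countable (Iio γ) := hγ
  refine isLindelof_of_countable_subcover fun {ι} U hU hcov => ?_
  have h1 : ∀ a : A, ∃ t : Finset ι, pr γ ⁻¹' {pr γ a} ⊆ ⋃ i ∈ t, U i := by
    intro a
    have hcl : IsClosed (pr γ ⁻¹' {pr γ a.1}) := isClosed_singleton.preimage (continuous_pr γ)
    refine hcl.isCompact.elim_finite_subcover U hU ?_
    intro k hk
    refine hcov (hA a.1 k ?_ a.2)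
    exact pr_eq.1 (Eq.symm hk)
  choose t ht using h1
  let O : A → Set (Iio γ → unitInterval) := fun a => (pr γ '' (⋃ i ∈ t a, U i)ᶜ)ᶜ
  have hO : ∀ a, IsOpen (O a) := by
    intro a
    have hcl : IsClosed (⋃ i ∈ t a, U i)ᶜ :=
      (isOpen_biUnion fun i _ => hU i).isClosed_compl
    exact ((hcl.isCompact.image (continuous_pr γ)).isClosed).isOpen_compl
  have hmem : ∀ a : A, pr γ a ∈ O a := by
    rintro a ⟨k, hk, hke⟩
    exact hk (ht a hke)
  have hL : IsLindelof (pr γ '' A) := HereditarilyLindelofSpace.isLindelof _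
  obtain ⟨r, hr, hrc⟩ := hL.elim_countable_subcover O hO (by
    rintro _ ⟨a, ha, rfl⟩
    exact mem_iUnion.2 ⟨⟨a, ha⟩, hmem ⟨a, ha⟩⟩)
  refine ⟨⋃ a ∈ r, (t a : Set ι), hr.biUnion fun a _ => (t a).countable_toSet, ?_⟩
  intro k hk
  obtain ⟨a, ha, hka⟩ := mem_iUnion₂.1 (hrc ⟨k, hk, rfl⟩)
  have : k ∈ ⋃ i ∈ t a, U i := by
    by_contra hcon
    exact hka ⟨k, hcon, rfl⟩
  obtain ⟨i, hi, hki⟩ := mem_iUnion₂.1 this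
  exact mem_iUnion₂.2 ⟨i, mem_iUnion₂.2 ⟨a, ha, hi⟩, hki⟩

theorem exists_basis : ∃ U : ℕ → Set unitInterval,
    TopologicalSpace.IsTopologicalBasis (range U) ∧ U 0 = ∅ := by
  obtain ⟨b, hb, -, hbb⟩ := TopologicalSpace.exists_countable_basis unitInterval
  have hne : b.Nonempty := by
    by_contra h
    rw [not_nonempty_iff_eq_empty] at h
    have := hbb.sUnion_eq
    rw [h, sUnion_empty] at this
    exact empty_ne_univ this
  obtain ⟨f, hf⟩ := hb.exists_eq_range hne
  refine ⟨fun n => Nat.casesOn n ∅ f, ?_, rfl⟩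
  have : range (fun n : ℕ => (Nat.casesOn n ∅ f : Set unitInterval)) = insert ∅ b := by
    rw [hf]
    ext s
    constructor
    · rintro ⟨n, rfl⟩
      cases n with
      | zero => exact mem_insert _ _
      | succ n => exact mem_insert_of_mem _ ⟨n, rfl⟩
    · rintro (rfl | ⟨n, rfl⟩)
      · exact ⟨0, rfl⟩
      · exact ⟨n+1, rfl⟩
  rw [this]
  exact hbb.insert_empty

noncomputable def Ub : ℕ → Set unitInterval := Classical.choose exists_basis
theorem Ub_basis : TopologicalSpace.IsTopologicalBasis (range Ub) :=
  (Classical.choose_spec exists_basis).1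
theorem Ub_zero : Ub 0 = ∅ := (Classical.choose_spec exists_basis).2
theorem Ub_open (n : ℕ) : IsOpen (Ub n) := Ub_basis.isOpen ⟨n, rfl⟩

def VJ (J : Finset (I × ℕ)) : Set (I → unitInterval) := {k | ∀ p ∈ J, k p.1 ∈ Ub p.2}

theorem VJ_open (J : Finset (I × ℕ)) : IsOpen (VJ J) := by
  have : VJ J = ⋂ p ∈ J, (fun k : I → unitInterval => k p.1) ⁻¹' Ub p.2 := by
    ext k; simp [VJ]
  rw [this]
  exact isOpen_biInter_finset fun p _ => (Ub_open p.2).preimage (continuous_apply p.1)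

theorem exists_VJ {O : Set (I → unitInterval)} (hO : IsOpen O) {k : I → unitInterval}
    (hk : k ∈ O) : ∃ J, k ∈ VJ J ∧ VJ J ⊆ O := by
  classical
  obtain ⟨s, u, hu, hs⟩ := isOpen_pi_iff.1 hO k hk
  have : ∀ i, ∃ n, i ∈ s → k i ∈ Ub n ∧ Ub n ⊆ u i := by
    intro i
    by_cases hi : i ∈ s
    · obtain ⟨_, ⟨n, rfl⟩, h1, h2⟩ := Ub_basis.exists_subset_of_mem_open (hu i hi).2 (hu i hi).1
      exact ⟨n, fun _ => ⟨h1, h2⟩⟩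
    · exact ⟨0, fun h => absurd h hi⟩
  choose n hn using this
  refine ⟨s.image fun i => (i, n i), ?_, ?_⟩
  · intro p hp
    obtain ⟨i, hi, rfl⟩ := Finset.mem_image.1 hp
    exact (hn i hi).1
  · intro x hx
    apply hs
    intro i hi
    exact (hn i hi).2 (hx (i, n i) (Finset.mem_image.2 ⟨i, hi, rfl⟩))

/-- restriction of conditions -/
theorem restrict {γ : I} {Q F : Set (I → unitInterval)} (hQ : Sat γ Q) (hF : Sat γ F)
    {J : Finset (I × ℕ)} {q : I → unitInterval} (hq : q ∈ VJ J) (h : VJ J ∩ Q ⊆ F) :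
    ∃ J' : Finset (I × ℕ), (∀ p ∈ J', p.1 < γ) ∧ q ∈ VJ J' ∧ VJ J' ∩ Q ⊆ F := by
  classical
  refine ⟨J.filter fun p => p.1 < γ, fun p hp => (Finset.mem_filter.1 hp).2,
    fun p hp => hq p (Finset.mem_filter.1 hp).1, ?_⟩
  rintro k ⟨hk, hkQ⟩
  refine hF (mix γ k q) k (fun i hi => (mix_lt i hi).symm) (h ⟨?_, hQ _ _ mix_lt hkQ⟩)
  intro p hp
  by_cases hi : p.1 < γ
  · have := hk p (Finset.mem_filter.2 ⟨hp, hi⟩)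
    simpa [mix, hi] using this
  · have := hq p hp
    simpa [mix, hi] using this

theorem countable_J {γ : I} (hγ : (Iio γ).Countable) :
    {J : Finset (I × ℕ) | ∀ p ∈ J, p.1 < γ}.Countable := by
  classical
  have : Countable (Iio γ) := hγ
  refine (countable_range (fun J : Finset (Iio γ × ℕ) => J.image fun p => (p.1.1, p.2))).mono ?_
  intro J hJ
  refine ⟨J.attach.image fun p => (⟨p.1.1, hJ p.1 p.2⟩, p.1.2), ?_⟩
  ext p
  simp only [Finset.mem_image, Finset.mem_attach, true_and, Subtype.exists]
  constructor
  · rintro ⟨_, ⟨a, ha, rfl⟩, rfl⟩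
    exact ha
  · intro hp
    exact ⟨_, ⟨p, hp, rfl⟩, rfl⟩

def Fs (s : ℕ → Finset (I × ℕ)) : Set (I → unitInterval) := {k | ∀ n, k ∉ VJ (s n)}

theorem Fs_closed (s : ℕ → Finset (I × ℕ)) : IsClosed (Fs s) := by
  have : Fs s = ⋂ n, (VJ (s n))ᶜ := by ext k; simp [Fs]
  rw [this]
  exact isClosed_iInter fun n => (VJ_open _).isClosed_compl

theorem Fs_sat (hbd : ∀ s : Set I, s.Countable → ∃ b, ∀ i ∈ s, i < b)
    (s : ℕ → Finset (I × ℕ)) : ∃ γ, Sat γ (Fs s) := by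
  obtain ⟨b, hb⟩ := hbd (⋃ n, Prod.fst '' (s n : Set (I × ℕ)))
    (countable_iUnion fun n => ((s n).countable_toSet).image _)
  refine ⟨b, fun k k' h hk n hn => hk n fun p hp => ?_⟩
  rw [h p.1 (hb _ (mem_iUnion.2 ⟨n, p, hp, rfl⟩))]
  exact hn p hp

theorem exists_Fs {γ : I} (hγ : (Iio γ).Countable) {F : Set (I → unitInterval)}
    (hF : IsClosed F) (hS : Sat γ F) : ∃ s, F = Fs s := by
  classical
  let T : Set (Finset (I × ℕ)) := insert {(γ, 0)} ({J | ∀ p ∈ J, p.1 < γ} ∩ {J | VJ J ∩ F = ∅})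
  have hT : T.Countable := ((countable_J hγ).mono inter_subset_left).insert _
  obtain ⟨s, hs⟩ := hT.exists_eq_range ⟨_, mem_insert _ _⟩
  refine ⟨s, ?_⟩
  ext k
  constructor
  · intro hk n hn
    have : s n ∈ T := hs ▸ mem_range_self n
    rcases this with h | h
    · have := hn (γ, 0) (by rw [h]; simp)
      rw [Ub_zero] at this
      exact this
    · have h2 : k ∈ VJ (s n) ∩ F := ⟨hn, hk⟩
      rw [h.2] at h2
      exact h2
  · intro hk
    by_contra hkF
    obtain ⟨J, hJ, hJF⟩ := exists_VJ hF.isOpen_compl hkF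
    obtain ⟨J', h1, h2, h3⟩ := restrict (Q := F) (F := ∅) hS (Sat.empty γ) hJ (by
      rintro x ⟨hx, hxF⟩
      exact hJF hx hxF)
    have : J' ∈ T := Or.inr ⟨h1, subset_empty_iff.1 h3⟩
    rw [hs] at this
    obtain ⟨n, rfl⟩ := this
    exact hk n h2

end
end PL

namespace PL

def ProdL {K : Type} [TopologicalSpace K] (E : Set K) : Prop :=
  ∀ (Z : Type) [TopologicalSpace Z] [T3Space Z] [LindelofSpace Z], LindelofSpace (E × Z)

theorem ProdL.isLindelof {K : Type} [TopologicalSpace K] {E : Set K} (h : ProdL E) :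
    IsLindelof E := by
  have := h PUnit
  rw [isLindelof_iff_lindelofSpace]
  exact LindelofSpace.of_continuous_surjective (f := (Prod.fst : E × PUnit → E)) continuous_fst
    (fun e => ⟨(e, PUnit.unit), rfl⟩)

theorem lemmaM {K : Type} [TopologicalSpace K] [CompactSpace K] [T2Space K] {E A : Set K}
    (hE : ProdL E) (hAE : ∀ a ∈ A, a ∉ E) {D : Type} (f : D → K) (hf : ∀ d, f d ∈ E)
    (conc : ∀ W : A → Set K, (∀ a, IsOpen (W a)) → (∀ a : A, a.1 ∈ W a) →
      ∃ r : Set A, r.Countable ∧ (A ⊆ ⋃ a ∈ r, W a) ∧ {d | f d ∉ ⋃ a ∈ r, W a}.Countable) :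
    (univ : Set D).Countable := by
  let _ : TopologicalSpace D := ⊥
  have : DiscreteTopology D := ⟨rfl⟩
  let Zs : Set (K × OnePoint D) := {z | (z.2 = OnePoint.infty ∧ z.1 ∈ A) ∨ ∃ d : D, z = (f d, ↑d)}
  have hZL : IsLindelof Zs := by
    refine isLindelof_of_countable_subcover fun {ι} U hU hcov => ?_
    have h1 : ∀ a : A, ∃ i : ι, ∃ W : Set K, ∃ N : Set (OnePoint D), IsOpen W ∧ IsOpen N ∧
        a.1 ∈ W ∧ OnePoint.infty ∈ N ∧ W ×ˢ N ⊆ U i := by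
      intro a
      obtain ⟨i, hi⟩ := mem_iUnion.1 (hcov (show ((a.1, OnePoint.infty) : K × OnePoint D) ∈ Zs from
        Or.inl ⟨rfl, a.2⟩))
      obtain ⟨W, N, h1, h2, h3, h4, h5⟩ := isOpen_prod_iff.1 (hU i) _ _ hi
      exact ⟨i, W, N, h1, h2, h3, h4, h5⟩
    choose ia W N hW hN haW hiN hWN using h1
    have h2 : ∀ d : D, ∃ i : ι, ((f d, ↑d) : K × OnePoint D) ∈ U i := fun d =>
      mem_iUnion.1 (hcov (Or.inr ⟨d, rfl⟩))
    choose id hid using h2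
    obtain ⟨r, hr, hrA, hrd⟩ := conc W hW haW
    have hfin : ∀ a, {d : D | (d : OnePoint D) ∉ N a}.Finite := by
      intro a
      have := ((OnePoint.isOpen_iff_of_mem (hiN a)).1 (hN a)).2
      exact isCompact_iff_finite.1 this
    refine ⟨ia '' r ∪ id '' ({d | f d ∉ ⋃ a ∈ r, W a} ∪ ⋃ a ∈ r, {d : D | (d : OnePoint D) ∉ N a}),
      (hr.image _).union ((hrd.union (hr.biUnion fun a _ => (hfin a).countable)).image _), ?_⟩
    rintro ⟨k, z⟩ hz
    rcases hz with ⟨h1, h2⟩ | ⟨d, hd⟩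
    · simp only at h1 h2
      subst h1
      obtain ⟨a, ha, hka⟩ := mem_iUnion₂.1 (hrA h2)
      exact mem_iUnion₂.2 ⟨ia a, Or.inl ⟨a, ha, rfl⟩, hWN a ⟨hka, hiN a⟩⟩
    · rw [hd]
      by_cases hb : d ∈ {d | f d ∉ ⋃ a ∈ r, W a} ∪ ⋃ a ∈ r, {d : D | (d : OnePoint D) ∉ N a}
      · exact mem_iUnion₂.2 ⟨id d, Or.inr ⟨d, hb, rfl⟩, hid d⟩
      · rw [mem_union, not_or] at hb
        obtain ⟨a, ha, hka⟩ := mem_iUnion₂.1 (not_not.1 hb.1)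
        refine mem_iUnion₂.2 ⟨ia a, Or.inl ⟨a, ha, rfl⟩, hWN a ⟨hka, ?_⟩⟩
        by_contra hcon
        exact hb.2 (mem_iUnion₂.2 ⟨a, ha, hcon⟩)
  have : LindelofSpace Zs := isLindelof_iff_lindelofSpace.1 hZL
  have hL := hE Zs
  let Δ : Set (E × Zs) := {p | p.1.1 = p.2.1.1}
  have hΔ : IsClosed Δ := isClosed_eq (by fun_prop) (by fun_prop)
  let O : D → Set (E × Zs) := fun d => {p | p.2.1.2 = (d : OnePoint D)}
  have hO : ∀ d, IsOpen (O d) := by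
    intro d
    have h1 : IsOpen ({(d : OnePoint D)} : Set (OnePoint D)) := by
      have := OnePoint.isOpenEmbedding_coe.isOpenMap {d} (isOpen_discrete _)
      rwa [image_singleton] at this
    exact h1.preimage (f := fun p : E × Zs => p.2.1.2) (by fun_prop)
  obtain ⟨r, hr, hrc⟩ := hΔ.isLindelof.elim_countable_subcover O hO (by
    rintro ⟨⟨e, he⟩, ⟨⟨k, z⟩, hz⟩⟩ hp
    change e = k at hp
    subst hp
    rcases hz with h | ⟨d, hd⟩
    · exact absurd he (hAE _ h.2)
    · exact mem_iUnion.2 ⟨d, congrArg Prod.snd hd⟩)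
  refine hr.mono fun d _ => ?_
  have : ((⟨f d, hf d⟩, ⟨(f d, ↑d), Or.inr ⟨d, rfl⟩⟩) : E × Zs) ∈ Δ := rfl
  obtain ⟨d', hd', h⟩ := mem_iUnion₂.1 (hrc this)
  have : d = d' := OnePoint.coe_injective h
  exact this ▸ hd'

section
variable {I : Type} [LinearOrder I]

theorem lemmaZ (hcnt : ∀ i : I, (Iio i).Countable)
    (hbd : ∀ s : Set I, s.Countable → ∃ b, ∀ i ∈ s, i < b)
    {E : Set (I → unitInterval)} (hE : ProdL E) (G : I → Set (I → unitInterval))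
    (hG : ∀ α, ∃ γ, Sat γ (G α)) (hEG : E ⊆ ⋃ α, G α)
    (hC : ∀ C : Set (I → unitInterval), IsCompact C → C ⊆ ⋃ α, G α →
      ∃ δ, C ⊆ ⋃ α ∈ Iio δ, G α) : ∃ δ, E ⊆ ⋃ α ∈ Iio δ, G α := by
  by_contra hcon
  have hx : ∀ δ, ∃ x ∈ E, x ∉ ⋃ α ∈ Iio δ, G α := by
    intro δ
    by_contra h
    push Not at h
    exact hcon ⟨δ, h⟩
  choose x hxE hxS using hx
  choose lev hlev using hG
  have key := lemmaM (A := (⋃ α, G α)ᶜ) hE (fun a ha hE' => ha (hEG hE')) x hxE (by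
    intro W hW haW
    obtain ⟨δ, hδ⟩ := hC (⋃ a, W a)ᶜ (isOpen_iUnion hW).isClosed_compl.isCompact (by
      intro k hk
      by_contra hk2
      exact hk (mem_iUnion.2 ⟨⟨k, hk2⟩, haW ⟨k, hk2⟩⟩))
    obtain ⟨b, hb⟩ := hbd (lev '' Iio δ) ((hcnt δ).image _)
    have hS : Sat b (⋃ α ∈ Iio δ, G α) := by
      intro k k' h hk
      obtain ⟨α, hα, hkα⟩ := mem_iUnion₂.1 hk
      exact mem_iUnion₂.2 ⟨α, hα, (hlev α).mono (hb _ ⟨α, hα, rfl⟩).le k k' h hkα⟩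
    obtain ⟨r, hr, hrc⟩ := (hS.compl.isLindelof (hcnt b)).elim_countable_subcover W hW (by
      intro k hk
      by_contra hk2
      exact hk (hδ hk2))
    refine ⟨r, hr, ?_, ?_⟩
    · intro k hk
      refine hrc fun hk2 => hk ?_
      obtain ⟨α, hα, hkα⟩ := mem_iUnion₂.1 hk2
      exact mem_iUnion.2 ⟨α, hkα⟩
    · refine (hcnt δ).mono fun d hd => ?_
      have h1 : x d ∈ ⋃ α ∈ Iio δ, G α := by
        by_contra h
        exact hd (hrc h)
      by_contra h2
      obtain ⟨α, hα, hkα⟩ := mem_iUnion₂.1 h1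
      refine hxS d (mem_iUnion₂.2 ⟨α, ?_, hkα⟩)
      exact lt_of_lt_of_le hα (not_lt.1 h2))
  obtain ⟨b, hb⟩ := hbd _ key
  exact lt_irrefl b (hb b trivial)

theorem level (hcnt : ∀ i : I, (Iio i).Countable)
    (hbd : ∀ s : Set I, s.Countable → ∃ b, ∀ i ∈ s, i < b)
    (ε : I → (ℕ → Finset (I × ℕ))) (hε : Function.Surjective ε)
    {E : Set (I → unitInterval)} (hE : ProdL E) (γ : I) :
    ∃ 𝓕 : Set (Set (I → unitInterval)), 𝓕.Countable ∧ (∀ F ∈ 𝓕, IsClosed F ∧ Sat γ F) ∧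
      sat γ E = ⋃₀ 𝓕 := by
  classical
  let G : I → Set (I → unitInterval) := fun α =>
    if Sat γ (Fs (ε α)) ∧ Fs (ε α) ⊆ sat γ E then Fs (ε α) else ∅
  have hG1 : ∀ α, IsClosed (G α) ∧ Sat γ (G α) ∧ G α ⊆ sat γ E := by
    intro α
    by_cases h : Sat γ (Fs (ε α)) ∧ Fs (ε α) ⊆ sat γ E
    · have e : G α = Fs (ε α) := if_pos h
      rw [e]
      exact ⟨Fs_closed _, h⟩
    · simp only [G, h, if_false]
      exact ⟨isClosed_empty, Sat.empty γ, empty_subset _⟩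
  have hG2 : ∀ F, IsClosed F → Sat γ F → F ⊆ sat γ E → ∃ α, F = G α := by
    intro F h1 h2 h3
    obtain ⟨s, rfl⟩ := exists_Fs (hcnt γ) h1 h2
    obtain ⟨α, rfl⟩ := hε s
    exact ⟨α, by simp only [G, h2, h3, and_self, if_true]⟩
  obtain ⟨δ, hδ⟩ := lemmaZ hcnt hbd hE G (fun α => ⟨γ, (hG1 α).2.1⟩) (by
    intro x hx
    obtain ⟨α, hα⟩ := hG2 (sat γ {x}) (isClosed_sat γ isClosed_singleton) (sat_sat _ _)
      ((sat_sat γ E).sat_subset (singleton_subset_iff.2 (subset_sat γ E hx)))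
    exact mem_iUnion.2 ⟨α, hα ▸ subset_sat γ {x} rfl⟩) (by
    intro C hC hCG
    obtain ⟨α, hα⟩ := hG2 (sat γ C) (isClosed_sat γ hC.isClosed) (sat_sat _ _)
      ((sat_sat γ E).sat_subset (hCG.trans (iUnion_subset fun α => (hG1 α).2.2)))
    obtain ⟨b, hb⟩ := hbd {α} (countable_singleton α)
    exact ⟨b, fun k hk => mem_iUnion₂.2 ⟨α, hb α rfl, hα ▸ subset_sat γ C hk⟩⟩)
  refine ⟨G '' Iio δ, (hcnt δ).image _, ?_, ?_⟩
  · rintro _ ⟨α, -, rfl⟩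
    exact ⟨(hG1 α).1, (hG1 α).2.1⟩
  · apply Subset.antisymm
    · rintro k ⟨c, hc, h⟩
      obtain ⟨α, hα, hcα⟩ := mem_iUnion₂.1 (hδ hc)
      exact ⟨G α, ⟨α, hα, rfl⟩, (hG1 α).2.1 c k h hcα⟩
    · rintro k ⟨_, ⟨α, -, rfl⟩, hk⟩
      exact (hG1 α).2.2 hk

theorem exists_not_mem_sat (hbd : ∀ s : Set I, s.Countable → ∃ b, ∀ i ∈ s, i < b)
    {E : Set (I → unitInterval)} (hE : ProdL E) {k : I → unitInterval} (hk : k ∉ E) :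
    ∃ γ, k ∉ sat γ E := by
  obtain ⟨r, hr, hrc⟩ := hE.isLindelof.elim_countable_subcover
    (fun i : I => {e : I → unitInterval | e i ≠ k i})
    (fun i => isOpen_ne_fun (continuous_apply i) continuous_const) (by
      intro e he
      by_contra h
      apply hk
      have : e = k := by
        funext i
        by_contra h2
        exact h (mem_iUnion.2 ⟨i, h2⟩)
      exact this ▸ he)
  obtain ⟨b, hb⟩ := hbd r hr
  refine ⟨b, ?_⟩
  rintro ⟨c, hc, h⟩
  obtain ⟨i, hi, hne⟩ := mem_iUnion₂.1 (hrc hc)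
  exact hne (h i (hb i hi))

end
end PL

namespace PL
section
variable {I : Type} [LinearOrder I]

theorem closing [WellFoundedLT I] (hcnt : ∀ i : I, (Iio i).Countable)
    (hbd : ∀ s : Set I, s.Countable → ∃ b, ∀ i ∈ s, i < b) (g : I → I) (a : I) :
    ∃ γ, a < γ ∧ ∀ α < γ, g α < γ := by
  have h1 : ∀ c : I, ∃ b, ∀ i ∈ g '' (insert c (Iio c)), i < b := fun c =>
    hbd _ (((hcnt c).insert c).image g)
  choose h hh using h1
  let s : ℕ → I := fun n => Nat.rec a (fun _ c => h c) n
  have hne : {b | ∀ n, s n < b}.Nonempty := by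
    obtain ⟨b, hb⟩ := hbd (range s) (countable_range s)
    exact ⟨b, fun n => hb _ ⟨n, rfl⟩⟩
  let γ := wellFounded_lt.min {b | ∀ n, s n < b} hne
  have hγ : ∀ n, s n < γ := wellFounded_lt.min_mem {b | ∀ n, s n < b} hne
  refine ⟨γ, hγ 0, fun α hα => ?_⟩
  have h2 : ∃ n, α ≤ s n := by
    by_contra hcon
    push Not at hcon
    exact wellFounded_lt.not_lt_min {b | ∀ n, s n < b} (x := α) hcon hα
  obtain ⟨n, hn⟩ := h2
  refine lt_trans (hh (s n) (g α) ⟨α, ?_, rfl⟩) (hγ (n+1))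
  rcases hn.eq_or_lt with h | h
  · exact Or.inl h
  · exact Or.inr h

/-- Baire category step. -/
theorem baire_step {K : Type} [TopologicalSpace K] [CompactSpace K] [T2Space K] {Q : Set K}
    (hQ : Q.Nonempty) {𝒯 : Set (Set K)} (hc : 𝒯.Countable) (hcl : ∀ T ∈ 𝒯, IsClosed T)
    (hcov : closure Q ⊆ ⋃₀ 𝒯) :
    ∃ T ∈ 𝒯, ∃ O, IsOpen O ∧ (O ∩ Q).Nonempty ∧ O ∩ Q ⊆ T := by
  have hco : CompactSpace (closure Q) := isCompact_iff_compactSpace.1 isClosed_closure.isCompact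
  have hne : Nonempty (closure Q) := hQ.closure.to_subtype
  have := hc.to_subtype
  obtain ⟨T, p, hp⟩ := nonempty_interior_of_iUnion_of_closed
    (f := fun T : 𝒯 => (Subtype.val : closure Q → K) ⁻¹' T.1)
    (fun T => (hcl T.1 T.2).preimage continuous_subtype_val) (by
      rw [eq_univ_iff_forall]
      intro p
      obtain ⟨T, hT, hpT⟩ := hcov p.2
      exact mem_iUnion.2 ⟨⟨T, hT⟩, hpT⟩)
  obtain ⟨O', hO', hOo, hpO⟩ := mem_interior.1 hp
  obtain ⟨O, hO, rfl⟩ := isOpen_induced_iff.1 hOo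
  refine ⟨T.1, T.2, O, hO, mem_closure_iff.1 p.2 O hO hpO, ?_⟩
  rintro x ⟨hx, hxQ⟩
  exact @hO' ⟨x, subset_closure hxQ⟩ hx

theorem alster [WellFoundedLT I] (hcnt : ∀ i : I, (Iio i).Countable)
    (hbd : ∀ s : Set I, s.Countable → ∃ b, ∀ i ∈ s, i < b)
    (ε : I → (ℕ → Finset (I × ℕ))) (hε : Function.Surjective ε)
    {E : Set (I → unitInterval)} (hE : ProdL E)
    (H : Set (I → unitInterval) → Set (I → unitInterval))
    (hH : ∀ C, IsCompact C → C ⊆ E → C ⊆ H C ∧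
      ∃ O : ℕ → Set (I → unitInterval), (∀ n, IsOpen (O n)) ∧ H C = ⋂ n, O n) :
    ∃ 𝒞 : Set (Set (I → unitInterval)), 𝒞.Countable ∧ (∀ C ∈ 𝒞, IsCompact C ∧ C ⊆ E) ∧
      E ⊆ ⋃ C ∈ 𝒞, H C := by
  classical
  let cond : I → Prop := fun α => ∃ C, IsCompact C ∧ C ⊆ E ∧ Fs (ε α) ⊆ H C
  let e : I → Set (I → unitInterval) := fun α => if cond α then Fs (ε α) else ∅
  have he_closed : ∀ α, IsClosed (e α) := by
    intro α
    by_cases h : cond α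
    · have : e α = Fs (ε α) := if_pos h
      rw [this]; exact Fs_closed _
    · have : e α = ∅ := if_neg h
      rw [this]; exact isClosed_empty
  have he_sub : ∀ α, e α ⊆ Fs (ε α) := by
    intro α
    by_cases h : cond α
    · have : e α = Fs (ε α) := if_pos h
      rw [this]
    · have : e α = ∅ := if_neg h
      rw [this]; exact empty_subset _
  have he_cond : ∀ α k, k ∈ e α → cond α := by
    intro α k hk
    by_contra h
    have : e α = ∅ := if_neg h
    rw [this] at hk
    exact hk
  have he_ex : ∀ γ F, IsClosed F → Sat γ F → (∃ C, IsCompact C ∧ C ⊆ E ∧ F ⊆ H C) →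
      ∃ β, e β = F := by
    intro γ F h1 h2 h3
    obtain ⟨s, rfl⟩ := exists_Fs (hcnt γ) h1 h2
    obtain ⟨β, rfl⟩ := hε s
    exact ⟨β, if_pos h3⟩
  let G : I → Set (I → unitInterval) := fun α => e α ∩ sat α E
  have hlev : ∀ α, ∃ γ, Sat γ (G α) := by
    intro α
    have : ∃ γ, Sat γ (e α) := by
      by_cases h : cond α
      · have : e α = Fs (ε α) := if_pos h
        rw [this]; exact Fs_sat hbd _
      · have : e α = ∅ := if_neg h
        rw [this]; exact ⟨α, Sat.empty α⟩
    obtain ⟨γ, hγ⟩ := this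
    exact ⟨max γ α, (hγ.mono (le_max_left _ _)).inter ((sat_sat α E).mono (le_max_right _ _))⟩
  choose lev hlevS using hlev
  have hEG : E ⊆ ⋃ α, G α := by
    intro x hx
    obtain ⟨h1, O, hO, hHO⟩ := hH {x} isCompact_singleton (singleton_subset_iff.2 hx)
    have h2 : ∀ n, ∃ J, x ∈ VJ J ∧ VJ J ⊆ O n := by
      intro n
      refine exists_VJ (hO n) ?_
      have : x ∈ H {x} := h1 rfl
      rw [hHO] at this
      exact mem_iInter.1 this n
    choose J hxJ hJO using h2
    obtain ⟨b, hb⟩ := hbd (⋃ n, Prod.fst '' (J n : Set (I × ℕ)))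
      (countable_iUnion fun n => ((J n).countable_toSet).image _)
    obtain ⟨β, hβ⟩ := he_ex b (sat b {x}) (isClosed_sat b isClosed_singleton) (sat_sat _ _)
      ⟨{x}, isCompact_singleton, singleton_subset_iff.2 hx, by
        rintro k ⟨c, rfl, h⟩
        rw [hHO]
        refine mem_iInter.2 fun n => hJO n fun p hp => ?_
        rw [← h p.1 (hb _ (mem_iUnion.2 ⟨n, p, hp, rfl⟩))]
        exact hxJ n p hp⟩
    refine mem_iUnion.2 ⟨β, ?_, subset_sat _ _ hx⟩
    rw [hβ]
    exact subset_sat b {x} rfl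
  have hcomp : ∀ C : Set (I → unitInterval), IsCompact C → C ⊆ ⋃ α, G α →
      ∃ δ, C ⊆ ⋃ α ∈ Iio δ, G α := by
    intro C hC hCG
    by_contra hcon
    push Not at hcon
    let S : I → Set (I → unitInterval) := fun γ => ⋃ α ∈ Iio γ, G α
    have hSmono : ∀ γ γ', γ ≤ γ' → S γ ⊆ S γ' := fun γ γ' h =>
      biUnion_subset_biUnion_left fun α hα => lt_of_lt_of_le hα h
    let good : I → Prop := fun γ => ∀ α < γ, lev α < γ
    let Q : I → Set (I → unitInterval) := fun γ => sat γ C ∩ (S γ)ᶜ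
    have hQmono : ∀ γ γ', γ ≤ γ' → Q γ' ⊆ Q γ := fun γ γ' h k hk =>
      ⟨sat_anti h C hk.1, fun h2 => hk.2 (hSmono γ γ' h h2)⟩
    have hSsat : ∀ γ, good γ → Sat γ (S γ) := by
      intro γ hγ k k' h hk
      obtain ⟨α, hα, hkα⟩ := mem_iUnion₂.1 hk
      exact mem_iUnion₂.2 ⟨α, hα, (hlevS α).mono (hγ α hα).le k k' h hkα⟩
    have hQsat : ∀ γ, good γ → Sat γ (Q γ) := fun γ hγ => (sat_sat γ C).inter (hSsat γ hγ).compl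
    have hQne : ∀ γ, (Q γ).Nonempty := by
      intro γ
      obtain ⟨k, hk, hk2⟩ := not_subset.1 (hcon γ)
      exact ⟨k, subset_sat γ C hk, hk2⟩
    have hQB : ∀ γ, good γ → Q γ ⊆ sat γ E := by
      rintro γ hγ k ⟨⟨c, hc, h⟩, hkS⟩
      obtain ⟨α, hα⟩ := mem_iUnion.1 (hCG hc)
      have hγα : γ ≤ α := by
        by_contra h2
        exact hkS (hSsat γ hγ c k h (mem_iUnion₂.2 ⟨α, not_le.1 h2, hα⟩))
      exact sat_sat γ E c k h (sat_anti hγα E hα.2)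
    choose 𝓕 h𝓕c h𝓕 h𝓕U using level hcnt hbd ε hε hE
    have hJ : ∀ γ, good γ → ∃ J : Finset (I × ℕ), (∀ p ∈ J, p.1 < γ) ∧ (VJ J ∩ Q γ).Nonempty ∧
        closure (VJ J ∩ Q γ) ⊆ sat γ E := by
      intro γ hγ
      let 𝒯 : Set (Set (I → unitInterval)) :=
        (⋃ α ∈ Iio γ, (fun F => e α ∩ F) '' 𝓕 α) ∪ 𝓕 γ
      obtain ⟨T, hT, O, hO, ⟨q, hqO, hqQ⟩, hOT⟩ := baire_step (hQne γ) (𝒯 := 𝒯)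
        (((hcnt γ).biUnion fun α _ => (h𝓕c α).image _).union (h𝓕c γ)) (by
          rintro T (hT | hT)
          · obtain ⟨α, hα, F, hF, rfl⟩ := mem_iUnion₂.1 hT
            exact (he_closed α).inter (h𝓕 α F hF).1
          · exact (h𝓕 γ T hT).1) (by
          intro k hk
          by_cases hkS : k ∈ S γ
          · obtain ⟨α, hα, hkα⟩ := mem_iUnion₂.1 hkS
            have h2 := hkα.2
            rw [h𝓕U α] at h2
            obtain ⟨F, hF, hkF⟩ := h2
            exact ⟨e α ∩ F, Or.inl (mem_iUnion₂.2 ⟨α, hα, F, hF, rfl⟩), hkα.1, hkF⟩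
          · have h1 : k ∈ sat γ C :=
              closure_minimal inter_subset_left (isClosed_sat γ hC.isClosed) hk
            have h2 := hQB γ hγ ⟨h1, hkS⟩
            rw [h𝓕U γ] at h2
            obtain ⟨F, hF, hkF⟩ := h2
            exact ⟨F, Or.inr hF, hkF⟩)
      rcases hT with hT | hT
      · exfalso
        obtain ⟨α, hα, F, hF, rfl⟩ := mem_iUnion₂.1 hT
        refine hqQ.2 (mem_iUnion₂.2 ⟨α, hα, (hOT ⟨hqO, hqQ⟩).1, ?_⟩)
        rw [h𝓕U α]
        exact ⟨F, hF, (hOT ⟨hqO, hqQ⟩).2⟩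
      · obtain ⟨J, hqJ, hJO⟩ := exists_VJ hO hqO
        obtain ⟨J', h1, h2, h3⟩ := restrict (hQsat γ hγ) (h𝓕 γ T hT).2 hqJ
          (fun k hk => hOT ⟨hJO hk.1, hk.2⟩)
        refine ⟨J', h1, ⟨q, h2, hqQ⟩, (closure_minimal h3 (h𝓕 γ T hT).1).trans ?_⟩
        rw [h𝓕U γ]
        exact subset_sUnion_of_mem hT
    let Γ : Finset (I × ℕ) → Set I := fun J => {γ | good γ ∧ (∀ p ∈ J, p.1 < γ) ∧
      (VJ J ∩ Q γ).Nonempty ∧ closure (VJ J ∩ Q γ) ⊆ sat γ E}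
    have hΓ : ∃ J, ∀ b, ∃ γ ∈ Γ J, b < γ := by
      by_contra hcon2
      push Not at hcon2
      choose b hb using hcon2
      have hg : ∀ α, ∃ c, ∀ i ∈ ({α, lev α} : Set I) ∪ b '' {J | ∀ p ∈ J, p.1 < α}, i < c :=
        fun α => hbd _ (((countable_singleton _).insert _).union ((countable_J (hcnt α)).image b))
      choose g hg using hg
      obtain ⟨a, -⟩ := hbd ∅ countable_empty
      obtain ⟨γ, haγ, hγ⟩ := closing hcnt hbd g a
      have hgood : good γ := fun α hα => (hg α (lev α) (by simp)).trans (hγ α hα)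
      obtain ⟨J, hJ1, hJ2, hJ3⟩ := hJ γ hgood
      have hα : ∀ J : Finset (I × ℕ), (∀ p ∈ J, p.1 < γ) → ∃ α < γ, ∀ p ∈ J, p.1 < α := by
        intro J
        induction J using Finset.induction_on with
        | empty => intro _; exact ⟨a, haγ, by simp⟩
        | insert p s hp ih =>
          intro h
          obtain ⟨α, h1, h2⟩ := ih fun p hp => h p (Finset.mem_insert_of_mem hp)
          refine ⟨max α (g p.1), max_lt h1 (hγ _ (h p (Finset.mem_insert_self _ _))), ?_⟩
          intro q hq
          rcases Finset.mem_insert.1 hq with rfl | hq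
          · exact lt_max_of_lt_right (hg q.1 q.1 (by simp))
          · exact lt_max_of_lt_left (h2 q hq)
      obtain ⟨α, hαγ, hαJ⟩ := hα J hJ1
      have h1 : b J < γ := (hg α (b J) (Or.inr ⟨J, hαJ, rfl⟩)).trans (hγ α hαγ)
      exact absurd (hb J γ ⟨hgood, hJ1, hJ2, hJ3⟩) (not_le.2 h1)
    obtain ⟨J, hΓJ⟩ := hΓ
    let R : I → Set (I → unitInterval) := fun γ => closure (VJ J ∩ Q γ)
    have hRmono : ∀ γ γ', γ ≤ γ' → R γ' ⊆ R γ := fun γ γ' h =>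
      closure_mono (inter_subset_inter_right _ (hQmono γ γ' h))
    let R0 : Set (I → unitInterval) := ⋂ γ : Γ J, R γ
    have hR0 : IsClosed R0 := isClosed_iInter fun _ => isClosed_closure
    have hR0E : R0 ⊆ E := by
      intro k hk
      by_contra hkE
      obtain ⟨γ, hγ⟩ := exists_not_mem_sat hbd hE hkE
      obtain ⟨γ', h1, h2⟩ := hΓJ γ
      exact hγ (sat_anti h2.le E (h1.2.2.2 (mem_iInter.1 hk ⟨γ', h1⟩)))
    obtain ⟨h1, O, hO, hHO⟩ := hH R0 hR0.isCompact hR0E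
    have hne : Nonempty (Γ J) := by
      obtain ⟨a, -⟩ := hbd ∅ countable_empty
      obtain ⟨γ', h1, h2⟩ := hΓJ a
      exact ⟨⟨γ', h1⟩⟩
    have h2 : ∀ n, ∃ γ : Γ J, R γ ⊆ O n := by
      intro n
      refine exists_subset_nhds_of_isCompact (V := fun γ : Γ J => R γ)
        ?_ (fun γ => isClosed_closure.isCompact) ?_
      · intro γ γ'
        rcases le_total γ.1 γ'.1 with h | h
        · exact ⟨γ', hRmono _ _ h, subset_rfl⟩
        · exact ⟨γ, subset_rfl, hRmono _ _ h⟩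
      · intro x hx
        have : x ∈ H R0 := h1 hx
        rw [hHO] at this
        exact (hO n).mem_nhds (mem_iInter.1 this n)
    choose γn hγn using h2
    obtain ⟨b, hb⟩ := hbd (range fun n => (γn n).1) (countable_range _)
    obtain ⟨γs, hγs, hbγs⟩ := hΓJ b
    have hRH : R γs ⊆ H R0 := by
      rw [hHO]
      refine subset_iInter fun n => (hRmono _ _ ?_).trans (hγn n)
      exact ((hb _ ⟨n, rfl⟩).trans hbγs).le
    have hVsat : Sat γs (VJ J) := by
      intro k k' h hk p hp
      rw [← h p.1 (hγs.2.1 p hp)]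
      exact hk p hp
    obtain ⟨β, hβ⟩ := he_ex γs (R γs) isClosed_closure (hVsat.inter (hQsat γs hγs.1)).closure
      ⟨R0, hR0.isCompact, hR0E, hRH⟩
    obtain ⟨γ', hγ', hlt⟩ := hΓJ (max γs β)
    obtain ⟨q, hqV, hqQ⟩ := hγ'.2.2.1
    have hqR : q ∈ R γ' := subset_closure ⟨hqV, hqQ⟩
    have hβγ : β < γ' := (le_max_right _ _).trans_lt hlt
    refine hqQ.2 (mem_iUnion₂.2 ⟨β, hβγ, ?_, ?_⟩)
    · rw [hβ]
      exact hRmono _ _ ((le_max_left _ _).trans hlt.le) hqR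
    · exact sat_anti hβγ.le E (hγ'.2.2.2 hqR)
  obtain ⟨δ, hδ⟩ := lemmaZ hcnt hbd hE G (fun α => ⟨_, hlevS α⟩) hEG hcomp
  have hCf : ∀ α, ∃ C, cond α → IsCompact C ∧ C ⊆ E ∧ Fs (ε α) ⊆ H C := by
    intro α
    by_cases h : cond α
    · obtain ⟨C, hC⟩ := h
      exact ⟨C, fun _ => hC⟩
    · exact ⟨∅, fun h2 => absurd h2 h⟩
  choose Cf hCf using hCf
  refine ⟨Cf '' (Iio δ ∩ {α | cond α}), ((hcnt δ).mono inter_subset_left).image _, ?_, ?_⟩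
  · rintro _ ⟨α, hα, rfl⟩
    exact ⟨(hCf α hα.2).1, (hCf α hα.2).2.1⟩
  · intro x hx
    obtain ⟨α, hα, hxα⟩ := mem_iUnion₂.1 (hδ hx)
    have hc := he_cond α x hxα.1
    exact mem_iUnion₂.2 ⟨Cf α, ⟨α, ⟨hα, hc⟩, rfl⟩, (hCf α hc).2.2 (he_sub α hxα.1)⟩

end
end PL

namespace PL

theorem tube {K : Type} [TopologicalSpace K] [CompactSpace K] [T2Space K] (C : ℕ → Set K)
    (hC : ∀ i, IsCompact (C i)) {O : Set (ℕ → K)} (hO : IsOpen O) (hCO : pi univ C ⊆ O) :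
    ∃ (m : ℕ) (V : ℕ → Set K), (∀ i, IsOpen (V i)) ∧ (∀ i, C i ⊆ V i) ∧
      {x : ℕ → K | ∀ i < m, x i ∈ V i} ⊆ O := by
  let ι := {p : ℕ × (ℕ → Set K) // ∀ i, IsOpen (p.2 i) ∧ C i ⊆ p.2 i}
  let T : ι → Set (ℕ → K) := fun p => {x | ∀ i < p.1.1, x i ∈ closure (p.1.2 i)}
  have hne : Nonempty ι := ⟨⟨(0, fun _ => univ), fun i => ⟨isOpen_univ, subset_univ _⟩⟩⟩
  have hTc : ∀ p, IsCompact (T p) := by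
    intro p
    have : T p = ⋂ i, ⋂ (_ : i < p.1.1), (fun x : ℕ → K => x i) ⁻¹' closure (p.1.2 i) := by
      ext x; simp [T]
    rw [this]
    exact (isClosed_iInter fun i => isClosed_iInter fun _ =>
      isClosed_closure.preimage (continuous_apply i)).isCompact
  obtain ⟨p, hp⟩ := exists_subset_nhds_of_isCompact (V := T) (U := O) (by
    intro p q
    refine ⟨⟨(max p.1.1 q.1.1, fun i => p.1.2 i ∩ q.1.2 i), fun i =>
      ⟨(p.2 i).1.inter (q.2 i).1, subset_inter (p.2 i).2 (q.2 i).2⟩⟩, ?_, ?_⟩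
    · intro x hx i hi
      exact closure_mono inter_subset_left (hx i (lt_max_of_lt_left hi))
    · intro x hx i hi
      exact closure_mono inter_subset_right (hx i (lt_max_of_lt_right hi))) hTc (by
    intro x hx
    refine hO.mem_nhds (hCO fun i _ => ?_)
    by_contra hxi
    obtain ⟨U, V, hU, hV, hCU, hxV, hd⟩ := SeparatedNhds.of_isCompact_isCompact (hC i)
      (isCompact_singleton (x := x i)) (disjoint_singleton_right.2 hxi)
    classical
    have := mem_iInter.1 hx ⟨(i + 1, Function.update (fun _ => univ) i U), by
      intro j
      by_cases h : j = i
      · subst h; simpa using ⟨hU, hCU⟩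
      · simp [Function.update_of_ne h]⟩ i (Nat.lt_succ_self i)
    simp only [Function.update_self] at this
    exact disjoint_left.1 (hd.closure_left hV) this (hxV rfl))
  exact ⟨p.1.1, p.1.2, fun i => (p.2 i).1, fun i => (p.2 i).2, fun x hx => hp fun i hi =>
    subset_closure (hx i hi)⟩

theorem power {K : Type} [TopologicalSpace K] [CompactSpace K] [T2Space K] {E : Set K}
    (hA : ∀ H : Set K → Set K, (∀ C, IsCompact C → C ⊆ E → C ⊆ H C ∧
      ∃ O : ℕ → Set K, (∀ n, IsOpen (O n)) ∧ H C = ⋂ n, O n) →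
      ∃ 𝒞 : Set (Set K), 𝒞.Countable ∧ (∀ C ∈ 𝒞, IsCompact C ∧ C ⊆ E) ∧ E ⊆ ⋃ C ∈ 𝒞, H C) :
    IsLindelof {x : ℕ → K | ∀ n, x n ∈ E} := by
  classical
  refine isLindelof_of_countable_subcover fun {ι} W hW hcov => ?_
  let P : ℕ → (ℕ → Set K) → Prop := fun n C => ∃ 𝒱 : Set (ℕ → Set K), 𝒱.Countable ∧
    (∀ v ∈ 𝒱, (∀ i, IsOpen (v i)) ∧ (∀ i < n, C i ⊆ v i) ∧
      ∃ t : Finset ι, pi univ v ⊆ ⋃ i ∈ t, W i) ∧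
    ∀ x : ℕ → K, (∀ i, x i ∈ E) → ∃ v ∈ 𝒱, ∀ i ≥ n, x i ∈ v i
  have hstep : ∀ n C, ¬ P n C → ∃ D, IsCompact D ∧ D ⊆ E ∧ ¬ P (n+1) (Function.update C n D) := by
    intro n C hn
    by_contra hcon
    push Not at hcon
    apply hn
    have h1 : ∀ D, ∃ 𝒱 : Set (ℕ → Set K), IsCompact D → D ⊆ E → (𝒱.Countable ∧
      (∀ v ∈ 𝒱, (∀ i, IsOpen (v i)) ∧ (∀ i < n+1, Function.update C n D i ⊆ v i) ∧
        ∃ t : Finset ι, pi univ v ⊆ ⋃ i ∈ t, W i) ∧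
      ∀ x : ℕ → K, (∀ i, x i ∈ E) → ∃ v ∈ 𝒱, ∀ i ≥ n+1, x i ∈ v i) := by
      intro D
      by_cases hD : IsCompact D ∧ D ⊆ E
      · obtain ⟨𝒱, h⟩ := hcon D hD.1 hD.2
        exact ⟨𝒱, fun _ _ => h⟩
      · exact ⟨∅, fun h1 h2 => absurd ⟨h1, h2⟩ hD⟩
    choose 𝒱 h𝒱 using h1
    obtain ⟨𝒞, h1, h2, h3⟩ := hA (fun D => ⋂ v ∈ 𝒱 D, v n) (by
      intro D hD hDE
      obtain ⟨hc, hv, -⟩ := h𝒱 D hD hDE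
      constructor
      · refine subset_iInter₂ fun v hvD => ?_
        have := (hv v hvD).2.1 n (Nat.lt_succ_self n)
        rwa [Function.update_self] at this
      · have hc2 : (insert Set.univ ((fun v : ℕ → Set K => v n) '' 𝒱 D)).Countable :=
          (hc.image _).insert _
        obtain ⟨O, hO⟩ := hc2.exists_eq_range ⟨_, mem_insert _ _⟩
        refine ⟨O, ?_, ?_⟩
        · intro k
          have : O k ∈ insert Set.univ ((fun v : ℕ → Set K => v n) '' 𝒱 D) := hO ▸ mem_range_self k
          rcases this with h | ⟨v, hvD, h⟩
          · rw [h]; exact isOpen_univ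
          · rw [← h]; exact (hv v hvD).1 n
        · rw [← sInter_range O, ← hO, sInter_insert, univ_inter, sInter_image])
    refine ⟨⋃ D ∈ 𝒞, 𝒱 D, h1.biUnion fun D hD => (h𝒱 D (h2 D hD).1 (h2 D hD).2).1, ?_, ?_⟩
    · intro v hv
      obtain ⟨D, hD, hvD⟩ := mem_iUnion₂.1 hv
      obtain ⟨-, h, -⟩ := h𝒱 D (h2 D hD).1 (h2 D hD).2
      obtain ⟨h4, h5, h6⟩ := h v hvD
      refine ⟨h4, fun i hi => ?_, h6⟩
      have := h5 i (hi.trans (Nat.lt_succ_self n))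
      rwa [Function.update_of_ne hi.ne] at this
    · intro x hx
      obtain ⟨D, hD, hxD⟩ := mem_iUnion₂.1 (h3 (hx n))
      obtain ⟨-, -, h⟩ := h𝒱 D (h2 D hD).1 (h2 D hD).2
      obtain ⟨v, hv, hxv⟩ := h x hx
      refine ⟨v, mem_iUnion₂.2 ⟨D, hD, hv⟩, fun i hi => ?_⟩
      rcases Nat.eq_or_lt_of_le hi with rfl | hi
      · exact mem_iInter₂.1 hxD v hv
      · exact hxv i hi
  have hP0 : P 0 (fun _ => ∅) := by
    by_contra h0
    choose! D hD1 hD2 hD3 using hstep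
    let Cs : ℕ → (ℕ → Set K) := fun n =>
      Nat.rec (fun _ => ∅) (fun n C => Function.update C n (D n C)) n
    have hCs : ∀ n, ¬ P n (Cs n) := by
      intro n
      induction n with
      | zero => exact h0
      | succ n ih => exact hD3 n _ ih
    let C : ℕ → Set K := fun i => D i (Cs i)
    have hCC : ∀ n i, i < n → Cs n i = C i := by
      intro n
      induction n with
      | zero => intro i hi; exact absurd hi (Nat.not_lt_zero i)
      | succ n ih =>
        intro i hi
        change Function.update (Cs n) n (D n (Cs n)) i = _
        rcases Nat.eq_or_lt_of_le (Nat.lt_succ_iff.1 hi) with rfl | h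
        · rw [Function.update_self]
        · rw [Function.update_of_ne h.ne, ih i h]
    have hcomp : ∀ i, IsCompact (C i) := fun i => hD1 i _ (hCs i)
    obtain ⟨t, ht⟩ := (isCompact_univ_pi hcomp).elim_finite_subcover W hW (by
      intro x hx
      exact hcov fun i => hD2 i _ (hCs i) (hx i trivial))
    obtain ⟨m, V, hV, hCV, hVO⟩ := tube C hcomp (isOpen_biUnion fun i (_ : i ∈ t) => hW i) ht
    refine hCs m ⟨{fun i => if i < m then V i else univ}, countable_singleton _, ?_, ?_⟩
    · rintro v rfl
      refine ⟨fun i => ?_, fun i hi => ?_, t, fun x hx => hVO fun i hi => ?_⟩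
      · by_cases h : i < m
        · simp only [h, if_true]; exact hV i
        · simp only [h, if_false]; exact isOpen_univ
      · simp only [hi, if_true, hCC m i hi]; exact hCV i
      · have := hx i trivial
        simpa only [hi, if_true] using this
    · intro x hx
      refine ⟨_, rfl, fun i hi => ?_⟩
      simp only [not_lt.2 hi, if_false, mem_univ]
  obtain ⟨𝒱, h1, h2, h3⟩ := hP0
  have h4 : ∀ v, ∃ t : Finset ι, v ∈ 𝒱 → pi univ v ⊆ ⋃ i ∈ t, W i := by
    intro v
    by_cases hv : v ∈ 𝒱
    · obtain ⟨t, ht⟩ := (h2 v hv).2.2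
      exact ⟨t, fun _ => ht⟩
    · exact ⟨∅, fun h => absurd h hv⟩
  choose t ht using h4
  refine ⟨⋃ v ∈ 𝒱, (t v : Set ι), h1.biUnion fun v _ => (t v).countable_toSet, fun x hx => ?_⟩
  obtain ⟨v, hv, hxv⟩ := h3 x hx
  obtain ⟨i, hi, hxi⟩ := mem_iUnion₂.1 (ht v hv (fun i _ => hxv i (Nat.zero_le i)))
  exact mem_iUnion₂.2 ⟨i, mem_iUnion₂.2 ⟨v, hv, hi⟩, hxi⟩

end PL

namespace PL

theorem quasi_of_lindelof {X : Type u} [TopologicalSpace X] [LindelofSpace X] :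
    QuasiLindelofSp X := by
  intro 𝒰 hU hcov
  obtain ⟨r, hr, hrc⟩ := (isLindelof_univ (X := X)).elim_countable_subcover
    (fun U : 𝒰 => U.1) (fun U => hU U.1 U.2) (by rw [← sUnion_eq_iUnion, hcov])
  refine ⟨Subtype.val '' r, by rintro _ ⟨U, -, rfl⟩; exact U.2, hr.image _, ?_⟩
  rw [sUnion_image]
  exact univ_subset_iff.1 hrc

theorem lindelof_of_quasi {X : Type u} [TopologicalSpace X] (h : QuasiLindelofSp X) :
    LindelofSpace X := by
  refine ⟨isLindelof_of_countable_subcover fun {ι} U hU hcov => ?_⟩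
  obtain ⟨𝒱, h1, h2, h3⟩ := h (range U) (by rintro _ ⟨i, rfl⟩; exact hU i) (by
    rw [sUnion_range]; exact univ_subset_iff.1 hcov)
  have h4 : ∀ V : 𝒱, ∃ i, U i = V.1 := fun V => h1 V.2
  choose f hf using h4
  have := h2.to_subtype
  refine ⟨range f, countable_range f, fun x _ => ?_⟩
  have hx : x ∈ ⋃₀ 𝒱 := by rw [h3]; trivial
  obtain ⟨V, hV, hxV⟩ := hx
  refine mem_iUnion₂.2 ⟨f ⟨V, hV⟩, ⟨_, rfl⟩, ?_⟩
  rw [hf]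
  exact hxV

def Br : Option ℕ → Type
  | none => Empty
  | some _ => ℕ

theorem card_W : #(WType Br) ≤ 𝔠 := by
  refine WType.cardinalMk_le_of_le ?_
  have h : ∀ a : Option ℕ, (𝔠 : Cardinal.{0}) ^ #(Br a) ≤ 𝔠 := by
    intro a
    cases a with
    | none =>
      have : #(Br none) = 0 := Cardinal.mk_eq_zero Empty
      rw [this, power_zero]
      exact (one_lt_aleph0.trans aleph0_lt_continuum).le
    | some n =>
      have : #(Br (some n)) = ℵ₀ := Cardinal.mk_nat
      rw [this, continuum_power_aleph0]
  refine (Cardinal.sum_le_sum _ _ h).trans ?_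
  rw [Cardinal.sum_const']
  refine (mul_le_mul_left (mk_le_aleph0 (α := Option ℕ)) 𝔠).trans ?_
  rw [aleph0_mul_continuum]

theorem exists_index (hCH : Cardinal.continuum.{0} = Cardinal.aleph 1) :
    ∃ (I : Type) (_ : LinearOrder I) (_ : WellFoundedLT I), #I = 𝔠 ∧
      (∀ i : I, (Iio i).Countable) ∧ (∀ s : Set I, s.Countable → ∃ b, ∀ i ∈ s, i < b) := by
  let I : Type := (Cardinal.aleph.{0} 1).ord.ToType
  have hI : #I = aleph 1 := mk_ord_toType _
  have hcnt : ∀ i : I, (Iio i).Countable := by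
    intro i
    have : #(Iio i) < aleph 1 := by
      have := mk_Iio_lt i (by simp [I])
      rwa [hI] at this
    rw [← le_aleph0_iff_set_countable]
    exact Order.lt_succ_iff.1 (this.trans_eq succ_aleph0.symm)
  refine ⟨I, inferInstance, inferInstance, hI.trans hCH.symm, hcnt, ?_⟩
  intro s hs
  by_contra hcon
  push Not at hcon
  have hu : (Set.univ : Set I).Countable := by
    refine (hs.biUnion fun i _ => (hcnt i).insert i).mono fun b _ => ?_
    obtain ⟨i, hi, hbi⟩ := hcon b
    refine mem_iUnion₂.2 ⟨i, hi, ?_⟩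
    rcases hbi.eq_or_lt with h | h
    · exact Or.inl h
    · exact Or.inr h
  have h1 : #I ≤ ℵ₀ := by rw [← mk_univ, le_aleph0_iff_set_countable]; exact hu
  rw [hI] at h1
  exact absurd h1 (not_le.2 aleph0_lt_aleph_one)

theorem exists_surj {α β : Type} [Nonempty β] (h : #β ≤ #α) : ∃ f : α → β, f.Surjective := by
  obtain ⟨e⟩ := Cardinal.le_def _ _ |>.1 h
  exact ⟨Function.invFun e, Function.invFun_surjective e.injective⟩

theorem main (hCH : Cardinal.continuum.{0} = Cardinal.aleph 1)
    (X : Type u) [TopologicalSpace X] [SequentialSpace X] [T3Space X] [LindelofSpace X]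
    (hprod : ∀ (Z : Type) [TopologicalSpace Z] [T3Space Z] [LindelofSpace Z],
      LindelofSpace (X × Z)) : QuasiLindelofSp (ℕ → X) := by
  classical
  intro 𝒰 hU hcov
  rcases isEmpty_or_nonempty X with hX | ⟨⟨x0⟩⟩
  · refine ⟨∅, empty_subset _, countable_empty, ?_⟩
    rw [eq_univ_iff_forall]
    intro x
    exact (hX.false (x 0)).elim
  -- neighbourhoods
  have h1 : ∀ x : ℕ → X, ∃ U ∈ 𝒰, ∃ s : Finset ℕ, ∃ g : ℕ → X → unitInterval,
      (∀ i, Continuous (g i)) ∧ (∀ i, g i (x i) = 0) ∧ {y | ∀ i ∈ s, g i (y i) < 1} ⊆ U := by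
    intro x
    have hx : x ∈ ⋃₀ 𝒰 := by rw [hcov]; trivial
    obtain ⟨U, hUU, hxU⟩ := hx
    obtain ⟨s, u, hu, hs⟩ := isOpen_pi_iff.1 (hU U hUU) x hxU
    have : ∀ i, ∃ g : X → unitInterval, Continuous g ∧ g (x i) = 0 ∧
        (i ∈ s → ∀ z, g z < 1 → z ∈ u i) := by
      intro i
      by_cases hi : i ∈ s
      · obtain ⟨g, h1, h2, h3⟩ := CompletelyRegularSpace.completely_regular_isOpen (x i) (u i)
          (hu i hi).1 (hu i hi).2
        refine ⟨g, h1, h2, fun _ z hz => ?_⟩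
        by_contra hzu
        have : g z = 1 := h3 hzu
        rw [this] at hz
        exact lt_irrefl _ hz
      · exact ⟨fun _ => 0, continuous_const, rfl, fun h => absurd h hi⟩
    choose g hg1 hg2 hg3 using this
    exact ⟨U, hUU, s, g, hg1, hg2, fun y hy => hs fun i hi => hg3 i hi _ (hy i hi)⟩
  choose Ux hUx s g hgc hg0 hgU using h1
  let N : (ℕ → X) → Set (ℕ → X) := fun x => {y | ∀ i ∈ s x, g x i (y i) < 1}
  have hsk : ∀ a : ℕ → X, ∃ y : ℕ → X, (∃ y, ∀ k, y ∉ N fun i => a (Nat.pair k i)) →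
      ∀ k, y ∉ N fun i => a (Nat.pair k i) := by
    intro a
    by_cases h : ∃ y, ∀ k, y ∉ N fun i => a (Nat.pair k i)
    · obtain ⟨y, hy⟩ := h
      exact ⟨y, fun _ => hy⟩
    · exact ⟨fun _ => x0, fun h2 => absurd h2 h⟩
  choose sk hsk using hsk
  have hlim : ∀ a : ℕ → X, ∃ l, ∀ p, Filter.Tendsto a Filter.atTop (𝓝 p) → l = p := by
    intro a
    by_cases h : ∃ l, Filter.Tendsto a Filter.atTop (𝓝 l)
    · obtain ⟨l, hl⟩ := h
      exact ⟨l, fun p hp => tendsto_nhds_unique hl hp⟩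
    · exact ⟨x0, fun p hp => absurd ⟨p, hp⟩ h⟩
  choose lm hlm using hlim
  let step : (Σ a : Option ℕ, Br a → X) → X := fun p =>
    match p with
    | ⟨none, _⟩ => x0
    | ⟨some 0, a⟩ => lm a
    | ⟨some (j+1), a⟩ => sk a j
  let ev : WType Br → X := WType.elim X step
  let w0 : WType Br := WType.mk none (fun b : Empty => b.elim)
  have hYseq : IsSeqClosed (range ev) := by
    intro x p hx hp
    choose w hw using hx
    refine ⟨WType.mk (some 0) w, ?_⟩
    have hww : (fun n => ev (w n)) = x := funext hw
    change lm (fun n => ev (w n)) = p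
    rw [hww]
    exact hlm x p hp
  have hYcl : IsClosed (range ev) := hYseq.isClosed
  have hmiss : ∀ ρ : ℕ → ℕ → WType Br, (∃ y, ∀ k, y ∉ N fun i => ev (ρ k i)) →
      ∃ y : ℕ → X, (∀ j, y j ∈ range ev) ∧ ∀ k, y ∉ N fun i => ev (ρ k i) := by
    intro ρ hρ
    let a : ℕ → WType Br := fun n => ρ (Nat.unpair n).1 (Nat.unpair n).2
    have ha : ∀ k, (fun i => ev (a (Nat.pair k i))) = fun i => ev (ρ k i) := by
      intro k
      funext i
      simp only [a, Nat.unpair_pair]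
    have h := hsk (fun n => ev (a n))
    simp only [ha] at h
    exact ⟨sk fun n => ev (a n), fun j => ⟨WType.mk (some (j+1)) a, rfl⟩, h hρ⟩
  obtain ⟨I, _, _, hI, hcnt, hbd⟩ := exists_index hCH
  have hIinf : Infinite I := by
    rw [Cardinal.infinite_iff, hI]
    exact aleph0_le_continuum
  have : Nonempty (WType Br) := ⟨w0⟩
  obtain ⟨ψ, hψ⟩ : ∃ ψ : I → (ℕ → WType Br) × ℕ, ψ.Surjective := by
    refine exists_surj ?_
    rw [hI, mk_prod, lift_id, lift_id, mk_nat, ← power_def, mk_nat]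
    refine (mul_le_mul_left (power_le_power_right card_W) ℵ₀).trans ?_
    rw [continuum_power_aleph0, continuum_mul_aleph0]
  obtain ⟨ε, hε⟩ : ∃ ε : I → (ℕ → Finset (I × ℕ)), ε.Surjective := by
    refine exists_surj ?_
    rw [hI, ← power_def, mk_nat, mk_finset_of_infinite, mk_prod, lift_id, lift_id, mk_nat, hI,
      continuum_mul_aleph0, continuum_power_aleph0]
  let F : X → I → unitInterval := fun z α => g (fun i => ev ((ψ α).1 i)) (ψ α).2 z
  have hF : Continuous F := continuous_pi fun α => hgc _ _
  let E : Set (I → unitInterval) := F '' range ev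
  have hE : ProdL E := by
    intro Z _ _ _
    have hL := hprod Z
    have hcl : IsClosed ((range ev) ×ˢ (Set.univ : Set Z)) := hYcl.prod isClosed_univ
    have hL2 : LindelofSpace ((range ev) ×ˢ (Set.univ : Set Z) : Set (X × Z)) :=
      isLindelof_iff_lindelofSpace.1 hcl.isLindelof
    refine LindelofSpace.of_continuous_surjective
      (f := fun p : ((range ev) ×ˢ (Set.univ : Set Z) : Set (X × Z)) =>
        ((⟨F p.1.1, p.1.1, p.2.1, rfl⟩, p.1.2) : E × Z)) ?_ ?_
    · refine Continuous.prodMk (Continuous.subtype_mk ?_ _) (by fun_prop)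
      exact hF.comp (by fun_prop)
    · rintro ⟨⟨_, x, hx, rfl⟩, z⟩
      exact ⟨⟨(x, z), hx, trivial⟩, rfl⟩
  have hpow := power (alster hcnt hbd ε hε hE)
  have hα : ∀ w i, ∃ α, ψ α = (w, i) := fun w i => hψ (w, i)
  choose α hα using hα
  have hFα : ∀ z w i, F z (α w i) = g (fun i => ev (w i)) i z := by
    intro z w i
    simp only [F, hα]
  let NN : (ℕ → WType Br) → Set (ℕ → I → unitInterval) := fun w =>
    {k | ∀ i ∈ s (fun i => ev (w i)), k i (α w i) < 1}
  have hNN : ∀ w, IsOpen (NN w) := by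
    intro w
    have : NN w = ⋂ i ∈ s (fun i => ev (w i)),
        (fun k : ℕ → I → unitInterval => k i (α w i)) ⁻¹' Iio 1 := by
      ext k; simp [NN]
    rw [this]
    exact isOpen_biInter_finset fun i _ => isOpen_Iio.preimage (by fun_prop)
  obtain ⟨r, hr, hrc⟩ := hpow.elim_countable_subcover NN hNN (by
    intro k hk
    choose y hy hyk using hk
    choose w hw using hy
    refine mem_iUnion.2 ⟨w, fun i _ => ?_⟩
    rw [← hyk i, hFα, ← hw i]
    have := hg0 (fun i => ev (w i)) i
    exact this.trans_lt zero_lt_one)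
  have hrne : r.Nonempty := by
    obtain ⟨w, hw, -⟩ := mem_iUnion₂.1 (hrc (show (fun _ => F x0) ∈ _ from
      fun n => ⟨x0, ⟨w0, rfl⟩, rfl⟩))
    exact ⟨w, hw⟩
  obtain ⟨ρ, rfl⟩ := hr.exists_eq_range hrne
  refine ⟨range fun k => Ux fun i => ev (ρ k i), ?_, countable_range _, ?_⟩
  · rintro _ ⟨k, rfl⟩
    exact hUx _
  · rw [eq_univ_iff_forall]
    by_contra hcon
    push Not at hcon
    obtain ⟨y, hy⟩ := hcon
    obtain ⟨y', h1, h2⟩ := hmiss ρ ⟨y, fun k hk => hy ⟨_, ⟨k, rfl⟩, hgU _ hk⟩⟩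
    obtain ⟨_, ⟨k, rfl⟩, hk⟩ := mem_iUnion₂.1 (hrc (show (fun n => F (y' n)) ∈ _ from
      fun n => ⟨y' n, h1 n, rfl⟩))
    refine h2 k fun i hi => ?_
    have h3 : F (y' i) (α (ρ k) i) < 1 := hk i hi
    rwa [hFα] at h3

end PL

/-- Under CH, every productively Lindelöf sequential space is
powerfully Lindelöf. -/
theorem stmt2 (hCH : Cardinal.continuum = Cardinal.aleph 1)
    (X : Type u) [TopologicalSpace X] [SequentialSpace X]
    (hprod : ProductivelyLindelofSp X) :
    PowerfullyLindelofSp X := by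
  have hCH0 : Cardinal.continuum.{0} = Cardinal.aleph 1 := by
    have h := hCH
    rw [← Cardinal.lift_continuum.{_, 0}] at h
    have h2 := Cardinal.lift_aleph.{0} (1 : Ordinal.{0})
    rw [Ordinal.lift_one] at h2
    rw [← h2] at h
    exact Cardinal.lift_injective h
  have hP : EngLindelofSp (X × PUnit.{u+1}) :=
    hprod PUnit ⟨inferInstance, inferInstance, PL.quasi_of_lindelof⟩
  obtain ⟨hP1, hP2, hP3⟩ := hP
  have hemb : IsEmbedding (fun x : X => (x, PUnit.unit.{u+1})) :=
    (Homeomorph.prodPUnit X).symm.isEmbedding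
  have hreg : RegularSpace X := hemb.isInducing.regularSpace
  have ht1 : T1Space X := hemb.t1Space
  have ht3 : T3Space X := {}
  have hLP := PL.lindelof_of_quasi hP3
  have hLX : LindelofSpace X := LindelofSpace.of_continuous_surjective
    (f := (Prod.fst : X × PUnit.{u+1} → X)) continuous_fst (fun e => ⟨(e, PUnit.unit), rfl⟩)
  refine ⟨inferInstance, inferInstance, PL.main hCH0 X ?_⟩
  intro Z _ _ _
  have hZ : LindelofSpace (ULift.{u} Z) := LindelofSpace.of_continuous_surjective
    (f := (ULift.up : Z → ULift.{u} Z)) continuous_uliftUp ULift.up_surjective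
  have hXZ := PL.lindelof_of_quasi
    (hprod (ULift.{u} Z) ⟨inferInstance, inferInstance, PL.quasi_of_lindelof⟩).2.2
  exact LindelofSpace.of_continuous_surjective
    (f := fun p : X × ULift.{u} Z => (p.1, p.2.down)) (by fun_prop)
    (fun p => ⟨(p.1, ULift.up p.2), rfl⟩)
end
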